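/- arXiv:1311.3887 — 2 statements merged into one kernel-verified Lean document; each statement's English description precedes it below -/
import Mathlib

section
/- Duality for H^↓: Let ρ_ABC = ψψ* be a pure density matrix on ℂ^(A×B×C) and let α, β ∈ (0,2) with α + β = 2 and α ≠ 1. Then H_α^↓(A|B)_ρ + H_β^↓(A|C)_ρ = 0, i.e. −D_α(ρ_AB ‖ 1_A ⊗ ρ_B) = D_β(ρ_AC ‖ 1_A ⊗ ρ_C). -/
open scoped Kronecker ComplexOrder
open Matrix

/-- Real power of a matrix via the functional calculus on the eigenvalues,
with the convention `0 ^ t = 0` (powers taken on the support). -/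
noncomputable def matRpow {n : Type*} [Fintype n] [DecidableEq n]
    (A : Matrix n n ℂ) (t : ℝ) : Matrix n n ℂ :=
  if hA : A.IsHermitian then
    (hA.eigenvectorUnitary : Matrix n n ℂ) *
      Matrix.diagonal (fun i =>
        ((if hA.eigenvalues i = 0 then (0 : ℝ) else (hA.eigenvalues i) ^ t : ℝ) : ℂ)) *
      star (hA.eigenvectorUnitary : Matrix n n ℂ)
  else 0

/-- Matrix logarithm on the support. -/
noncomputable def matLog {n : Type*} [Fintype n] [DecidableEq n]
    (A : Matrix n n ℂ) : Matrix n n ℂ :=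
  if hA : A.IsHermitian then
    (hA.eigenvectorUnitary : Matrix n n ℂ) *
      Matrix.diagonal (fun i => ((Real.log (hA.eigenvalues i) : ℝ) : ℂ)) *
      star (hA.eigenvectorUnitary : Matrix n n ℂ)
  else 0

/-- Partial trace over the first tensor factor. -/
noncomputable def trFst {a b : Type*} [Fintype a] (M : Matrix (a × b) (a × b) ℂ) :
    Matrix b b ℂ :=
  Matrix.of fun j j' => ∑ i, M (i, j) (i, j')

/-- Partial trace over the second tensor factor. -/
noncomputable def trSnd {a b : Type*} [Fintype b] (M : Matrix (a × b) (a × b) ℂ) :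
    Matrix a a ℂ :=
  Matrix.of fun i i' => ∑ j, M (i, j) (i', j)

/-- Partial trace over the third factor of a tripartite system. -/
noncomputable def trThird {a b c : Type*} [Fintype c]
    (M : Matrix (a × b × c) (a × b × c) ℂ) : Matrix (a × b) (a × b) ℂ :=
  Matrix.of fun p p' => ∑ k, M (p.1, p.2, k) (p'.1, p'.2, k)

/-- Partial trace over the second factor of a tripartite system. -/
noncomputable def trSecond {a b c : Type*} [Fintype b]
    (M : Matrix (a × b × c) (a × b × c) ℂ) : Matrix (a × c) (a × c) ℂ :=
  Matrix.of fun p p' => ∑ j, M (p.1, j, p.2) (p'.1, j, p'.2)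

/-- Partial trace over the first two factors of a tripartite system. -/
noncomputable def trFstSnd {a b c : Type*} [Fintype a] [Fintype b]
    (M : Matrix (a × b × c) (a × b × c) ℂ) : Matrix c c ℂ :=
  Matrix.of fun k k' => ∑ i, ∑ j, M (i, j, k) (i, j, k')

/-- Partial trace over the first and third factors of a tripartite system. -/
noncomputable def trFstThird {a b c : Type*} [Fintype a] [Fintype c]
    (M : Matrix (a × b × c) (a × b × c) ℂ) : Matrix b b ℂ :=
  Matrix.of fun j j' => ∑ i, ∑ k, M (i, j, k) (i, j', k)

/-- Quantum Rényi relative entropy `D_α(ρ‖σ)`. -/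
noncomputable def renyiDiv {n : Type*} [Fintype n] [DecidableEq n]
    (α : ℝ) (ρ σ : Matrix n n ℂ) : ℝ :=
  (α - 1)⁻¹ * Real.log ((matRpow ρ α * matRpow σ (1 - α)).trace.re)

/-- Sandwiched quantum Rényi divergence `D̃_α(ρ‖σ)`. -/
noncomputable def sandwichedRenyiDiv {n : Type*} [Fintype n] [DecidableEq n]
    (α : ℝ) (ρ σ : Matrix n n ℂ) : ℝ :=
  (α - 1)⁻¹ * Real.log
    ((matRpow (matRpow σ ((1 - α) / (2 * α)) * ρ * matRpow σ ((1 - α) / (2 * α))) α).trace.re)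

/-- Quantum relative entropy `D(ρ‖σ)`. -/
noncomputable def relEntropy {n : Type*} [Fintype n] [DecidableEq n]
    (ρ σ : Matrix n n ℂ) : ℝ :=
  (ρ * (matLog ρ - matLog σ)).trace.re

/-!
For a pure state `ρ = φφ*` on two systems, `(ρ₁ ⊗ 1) φ = (1 ⊗ ρ₂) φ`. The two operators commute, so
this passes to polynomials in them, and hence to all powers on the support, since a function on
finite spectra agrees there with a polynomial. Applied to `AB` against `C`, this transfers
`ρ_AB ^ (α - 1)` to `ρ_C ^ (α - 1)` and gives
`tr (ρ_AB ^ α (1 ⊗ ρ_B) ^ (1 - α)) = tr (ρ (1 ⊗ ρ_B ^ (1 - α) ⊗ ρ_C ^ (α - 1)))`.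
As `α - 1 = 1 - β`, the right-hand side is symmetric under exchanging `(B, α)` with `(C, β)`.
-/

lemma exists_polynomial_eqOn_of_finite {F : Type*} [Field F] {s : Set F} (hs : s.Finite)
    (f : F → F) : ∃ p : Polynomial F, s.EqOn (fun x ↦ p.eval x) f := by
  have : Finite s := hs
  obtain ⟨p, hp⟩ := (Polynomial.exists_eval_eq_iff ((↑) : s → F) (fun x ↦ f x)).2
    fun x y hxy ↦ congrArg f hxy
  exact ⟨p, fun x hx ↦ hp ⟨x, hx⟩⟩

lemma aeval_mul_eq_of_commute {R S : Type*} [CommSemiring R] [Semiring S] [Algebra R S]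
    {a b x : S} (hab : Commute a b) (hx : a * x = b * x) (p : Polynomial R) :
    Polynomial.aeval a p * x = Polynomial.aeval b p * x := by
  have pow_mul_eq (k : ℕ) : a ^ k * x = b ^ k * x := by
    induction k with
    | zero => simp only [pow_zero]
    | succ k ih =>
      calc a ^ (k + 1) * x = a ^ k * b * x := by rw [pow_succ, mul_assoc, hx, mul_assoc]
        _ = b * (a ^ k * x) := by rw [(hab.pow_left k).eq, mul_assoc]
        _ = b ^ (k + 1) * x := by rw [ih, pow_succ', mul_assoc]
  induction p using Polynomial.induction_on' with
  | add p q hp hq => rw [map_add, map_add, add_mul, add_mul, hp, hq]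
  | monomial k r =>
    rw [Polynomial.aeval_monomial, Polynomial.aeval_monomial, mul_assoc, mul_assoc, pow_mul_eq]

lemma isHermitian_kronecker {m n R : Type*} [CommSemiring R] [StarRing R] {M : Matrix m m R}
    {N : Matrix n n R} (hM : M.IsHermitian) (hN : N.IsHermitian) : (M ⊗ₖ N).IsHermitian := by
  rw [IsHermitian, conjTranspose_kronecker, hM.eq, hN.eq]

lemma isHermitian_vecMulVec_star {m R : Type*} [NonUnitalSemiring R] [StarRing R] (φ : m → R) :
    (vecMulVec φ (star φ)).IsHermitian := by
  rw [IsHermitian, conjTranspose_vecMulVec, star_star]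

lemma trace_submatrix_mul_submatrix {m n R : Type*} [Fintype m] [Fintype n]
    [NonUnitalNonAssocSemiring R] (e : m ≃ n) (M N : Matrix n n R) :
    (M.submatrix e e * N.submatrix e e).trace = (M * N).trace := by
  rw [submatrix_mul_equiv]
  exact e.sum_comp fun i ↦ (M * N) i i

section SpectralPower

variable {m n : Type*} [Fintype m] [DecidableEq m] [Fintype n] [DecidableEq n]

/-- The scalar function behind `matRpow`: `x ↦ x ^ t` on the support, and `0` at `0` for every
exponent, including `t = 0`. -/
noncomputable def supportRpow (t x : ℝ) : ℝ :=
  if x = 0 then 0 else x ^ t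

lemma supportRpow_sub_one_mul_self (t x : ℝ) : supportRpow (t - 1) x * x = supportRpow t x := by
  rcases eq_or_ne x 0 with rfl | hx
  · simp [supportRpow]
  · rw [supportRpow, supportRpow, if_neg hx, if_neg hx, Real.rpow_sub_one hx, div_mul_cancel₀ _ hx]

lemma matRpow_eq_cfc {M : Matrix n n ℂ} (hM : M.IsHermitian) (t : ℝ) :
    matRpow M t = cfc (supportRpow t) M := by
  rw [hM.cfc_eq, IsHermitian.cfc, Unitary.conjStarAlgAut_apply, matRpow, dif_pos hM]
  rfl

lemma matRpow_sub_one_mul_self {M : Matrix n n ℂ} (hM : M.IsHermitian) (t : ℝ) :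
    matRpow M (t - 1) * M = matRpow M t := by
  have continuousOn_spectrum (f : ℝ → ℝ) : ContinuousOn f (spectrum ℝ M) :=
    M.finite_real_spectrum.continuousOn f
  calc matRpow M (t - 1) * M
      = cfc (supportRpow (t - 1)) M * cfc (fun x : ℝ ↦ x) M := by
        rw [matRpow_eq_cfc hM, cfc_id' ℝ M hM.isSelfAdjoint]
    _ = cfc (fun x ↦ supportRpow (t - 1) x * x) M :=
        (cfc_mul _ _ M (continuousOn_spectrum _)).symm
    _ = matRpow M t := by simp only [supportRpow_sub_one_mul_self, matRpow_eq_cfc hM]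

lemma exists_polynomial_matRpow_eq_aeval {M : Matrix m m ℂ} {N : Matrix n n ℂ}
    (hM : M.IsHermitian) (hN : N.IsHermitian) (t : ℝ) :
    ∃ p : Polynomial ℝ, matRpow M t = Polynomial.aeval M p ∧
      matRpow N t = Polynomial.aeval N p := by
  obtain ⟨p, hp⟩ := exists_polynomial_eqOn_of_finite
    (M.finite_real_spectrum.union N.finite_real_spectrum) (supportRpow t)
  refine ⟨p, ?_, ?_⟩
  · rw [matRpow_eq_cfc hM, ← cfc_polynomial p M hM]
    exact cfc_congr fun x hx ↦ (hp (.inl hx)).symm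
  · rw [matRpow_eq_cfc hN, ← cfc_polynomial p N hN]
    exact cfc_congr fun x hx ↦ (hp (.inr hx)).symm

lemma matRpow_map {M : Matrix m m ℂ} (hM : M.IsHermitian)
    (φ : Matrix m m ℂ →ₐ[ℝ] Matrix n n ℂ) (hφM : (φ M).IsHermitian) (t : ℝ) :
    matRpow (φ M) t = φ (matRpow M t) := by
  obtain ⟨p, hpM, hpφM⟩ := exists_polynomial_matRpow_eq_aeval hM hφM t
  rw [hpφM, hpM, Polynomial.aeval_algHom_apply]

lemma matRpow_mul_eq_of_commute {M N X : Matrix n n ℂ} (hM : M.IsHermitian) (hN : N.IsHermitian)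
    (hMN : Commute M N) (hX : M * X = N * X) (t : ℝ) :
    matRpow M t * X = matRpow N t * X := by
  obtain ⟨p, hpM, hpN⟩ := exists_polynomial_matRpow_eq_aeval hM hN t
  rw [hpM, hpN, aeval_mul_eq_of_commute hMN hX]

lemma matRpow_kronecker_one {M : Matrix m m ℂ} (hM : M.IsHermitian) (t : ℝ) :
    matRpow (M ⊗ₖ (1 : Matrix n n ℂ)) t = matRpow M t ⊗ₖ (1 : Matrix n n ℂ) :=
  matRpow_map hM (((kroneckerAlgEquiv m n ℂ).toAlgHom.comp
    Algebra.TensorProduct.includeLeft).restrictScalars ℝ)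
    (isHermitian_kronecker hM isHermitian_one) t

lemma matRpow_one_kronecker {M : Matrix n n ℂ} (hM : M.IsHermitian) (t : ℝ) :
    matRpow ((1 : Matrix m m ℂ) ⊗ₖ M) t = (1 : Matrix m m ℂ) ⊗ₖ matRpow M t :=
  matRpow_map hM (((kroneckerAlgEquiv m n ℂ).toAlgHom.comp
    Algebra.TensorProduct.includeRight).restrictScalars ℝ)
    (isHermitian_kronecker isHermitian_one hM) t

end SpectralPower

section PartialTrace

variable {m n : Type*}

lemma isHermitian_trFst [Fintype m] {M : Matrix (m × n) (m × n) ℂ} (hM : M.IsHermitian) :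
    (trFst M).IsHermitian := by
  ext j j'
  simp only [trFst, conjTranspose_apply, of_apply, star_sum, hM.apply]

lemma isHermitian_trSnd [Fintype n] {M : Matrix (m × n) (m × n) ℂ} (hM : M.IsHermitian) :
    (trSnd M).IsHermitian := by
  ext i i'
  simp only [trSnd, conjTranspose_apply, of_apply, star_sum, hM.apply]

variable [Fintype m] [Fintype n]

lemma trace_trSnd_mul [DecidableEq n] (M : Matrix (m × n) (m × n) ℂ) (N : Matrix m m ℂ) :
    (trSnd M * N).trace = (M * (N ⊗ₖ (1 : Matrix n n ℂ))).trace := by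
  simp only [trace, diag_apply, mul_apply, trSnd, of_apply, kroneckerMap_apply, one_apply,
    Fintype.sum_prod_type, Finset.sum_mul, mul_ite, mul_one, mul_zero, Finset.sum_ite_eq',
    Finset.mem_univ, if_true]
  exact Finset.sum_congr rfl fun _ _ ↦ Finset.sum_comm

variable [DecidableEq m] [DecidableEq n]

lemma trSnd_kronecker_one_mul_vecMulVec (φ : m × n → ℂ) :
    (trSnd (vecMulVec φ (star φ)) ⊗ₖ (1 : Matrix n n ℂ)) * vecMulVec φ (star φ) =
      ((1 : Matrix m m ℂ) ⊗ₖ trFst (vecMulVec φ (star φ))) * vecMulVec φ (star φ) := by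
  rw [mul_vecMulVec, mul_vecMulVec]
  congr 1
  ext ⟨i, j⟩
  calc ((trSnd (vecMulVec φ (star φ)) ⊗ₖ (1 : Matrix n n ℂ)) *ᵥ φ) (i, j)
      = ∑ i', ∑ j', φ (i, j') * star (φ (i', j')) * φ (i', j) := by
        simp [mulVec, dotProduct, trSnd, vecMulVec_apply, one_apply, Fintype.sum_prod_type,
          Finset.sum_mul]
    _ = ∑ j', ∑ i', φ (i', j) * star (φ (i', j')) * φ (i, j') := by
        rw [Finset.sum_comm]
        exact Finset.sum_congr rfl fun _ _ ↦ Finset.sum_congr rfl fun _ _ ↦ by ring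
    _ = (((1 : Matrix m m ℂ) ⊗ₖ trFst (vecMulVec φ (star φ))) *ᵥ φ) (i, j) := by
        simp [mulVec, dotProduct, trFst, vecMulVec_apply, one_apply, Fintype.sum_prod_type,
          Finset.sum_mul]

lemma matRpow_trSnd_kronecker_one_mul_vecMulVec (φ : m × n → ℂ) (t : ℝ) :
    (matRpow (trSnd (vecMulVec φ (star φ))) t ⊗ₖ (1 : Matrix n n ℂ)) * vecMulVec φ (star φ) =
      ((1 : Matrix m m ℂ) ⊗ₖ matRpow (trFst (vecMulVec φ (star φ))) t) *
        vecMulVec φ (star φ) := by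
  have hSnd := isHermitian_trSnd (isHermitian_vecMulVec_star φ)
  have hFst := isHermitian_trFst (isHermitian_vecMulVec_star φ)
  have commute_local : Commute (trSnd (vecMulVec φ (star φ)) ⊗ₖ (1 : Matrix n n ℂ))
      ((1 : Matrix m m ℂ) ⊗ₖ trFst (vecMulVec φ (star φ))) := by
    rw [Commute, SemiconjBy, ← mul_kronecker_mul, ← mul_kronecker_mul, mul_one, one_mul, mul_one,
      one_mul]
  rw [← matRpow_kronecker_one hSnd, ← matRpow_one_kronecker hFst]
  exact matRpow_mul_eq_of_commute (isHermitian_kronecker hSnd isHermitian_one)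
    (isHermitian_kronecker isHermitian_one hFst) commute_local
    (trSnd_kronecker_one_mul_vecMulVec φ) t

lemma trace_matRpow_trSnd_mul (φ : m × n → ℂ) (K : Matrix m m ℂ) (t : ℝ) :
    (matRpow (trSnd (vecMulVec φ (star φ))) t * K).trace =
      (vecMulVec φ (star φ) *
        (K ⊗ₖ matRpow (trFst (vecMulVec φ (star φ))) (t - 1))).trace := by
  have hSnd := isHermitian_trSnd (isHermitian_vecMulVec_star φ)
  have transfer := matRpow_trSnd_kronecker_one_mul_vecMulVec φ (t - 1)
  set ρ := vecMulVec φ (star φ)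
  set P := matRpow (trSnd ρ) (t - 1)
  set Q := matRpow (trFst ρ) (t - 1)
  calc (matRpow (trSnd ρ) t * K).trace
      = (trSnd ρ * (K * P)).trace := by
        rw [← matRpow_sub_one_mul_self hSnd, mul_assoc, trace_mul_comm, mul_assoc]
    _ = (ρ * ((K ⊗ₖ (1 : Matrix n n ℂ)) * (P ⊗ₖ (1 : Matrix n n ℂ)))).trace := by
        rw [trace_trSnd_mul, ← mul_kronecker_mul, one_mul]
    _ = ((K ⊗ₖ (1 : Matrix n n ℂ)) * ((P ⊗ₖ (1 : Matrix n n ℂ)) * ρ)).trace := by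
        rw [trace_mul_comm, mul_assoc]
    _ = ((K ⊗ₖ (1 : Matrix n n ℂ)) * (((1 : Matrix m m ℂ) ⊗ₖ Q) * ρ)).trace := by
        rw [transfer]
    _ = (ρ * (K ⊗ₖ Q)).trace := by
        rw [← mul_assoc, ← mul_kronecker_mul, mul_one, one_mul, trace_mul_comm]

end PartialTrace

section Tripartite

lemma isHermitian_trThird {A B C : Type*} [Fintype C] {M : Matrix (A × B × C) (A × B × C) ℂ}
    (hM : M.IsHermitian) : (trThird M).IsHermitian := by
  ext p p'
  simp only [trThird, conjTranspose_apply, of_apply, star_sum, hM.apply]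

lemma isHermitian_trFstSnd {A B C : Type*} [Fintype A] [Fintype B]
    {M : Matrix (A × B × C) (A × B × C) ℂ} (hM : M.IsHermitian) : (trFstSnd M).IsHermitian := by
  ext k k'
  simp only [trFstSnd, conjTranspose_apply, of_apply, star_sum, hM.apply]

variable {A B C : Type*} [Fintype A] [DecidableEq A] [Fintype B] [DecidableEq B]
  [Fintype C] [DecidableEq C]

lemma trace_matRpow_trThird_mul_kronecker (ψ : A × B × C → ℂ) (K : Matrix A A ℂ)
    (L : Matrix B B ℂ) (t : ℝ) :
    (matRpow (trThird (vecMulVec ψ (star ψ))) t * (K ⊗ₖ L)).trace =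
      (vecMulVec ψ (star ψ) *
        (K ⊗ₖ (L ⊗ₖ matRpow (trFstSnd (vecMulVec ψ (star ψ))) (t - 1)))).trace := by
  let e := Equiv.prodAssoc A B C
  have trFstSnd_eq : trFst (vecMulVec (ψ ∘ e) (star (ψ ∘ e))) =
      trFstSnd (vecMulVec ψ (star ψ)) := by
    ext k k'
    exact Fintype.sum_prod_type _
  calc (matRpow (trThird (vecMulVec ψ (star ψ))) t * (K ⊗ₖ L)).trace
      = (vecMulVec (ψ ∘ e) (star (ψ ∘ e)) *
          ((K ⊗ₖ L) ⊗ₖ matRpow (trFstSnd (vecMulVec ψ (star ψ))) (t - 1))).trace := by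
        rw [← trFstSnd_eq]
        exact trace_matRpow_trSnd_mul (ψ ∘ e) (K ⊗ₖ L) t
    _ = _ := by
        rw [← trace_submatrix_mul_submatrix e, ← kronecker_assoc']
        rfl

lemma trace_matRpow_trSecond_mul_kronecker (ψ : A × B × C → ℂ) (K : Matrix A A ℂ)
    (L : Matrix C C ℂ) (t : ℝ) :
    (matRpow (trSecond (vecMulVec ψ (star ψ))) t * (K ⊗ₖ L)).trace =
      (vecMulVec ψ (star ψ) *
        (K ⊗ₖ (matRpow (trFst (trThird (vecMulVec ψ (star ψ)))) (t - 1) ⊗ₖ L))).trace := by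
  -- Exchanging the last two factors turns `ρ_AC` and `ρ_B` into `ρ_AB` and `ρ_C`.
  let e := (Equiv.refl A).prodCongr (Equiv.prodComm C B)
  have kronecker_swap (G : Matrix B B ℂ) :
      (K ⊗ₖ (G ⊗ₖ L)).submatrix e e = K ⊗ₖ (L ⊗ₖ G) := by
    ext p q
    exact congrArg (K p.1 q.1 * ·) (mul_comm _ _)
  calc (matRpow (trSecond (vecMulVec ψ (star ψ))) t * (K ⊗ₖ L)).trace
      = ((vecMulVec ψ (star ψ)).submatrix e e * (K ⊗ₖ (L ⊗ₖ
          matRpow (trFst (trThird (vecMulVec ψ (star ψ)))) (t - 1)))).trace :=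
        trace_matRpow_trThird_mul_kronecker (ψ ∘ e) K L t
    _ = _ := by rw [← kronecker_swap, trace_submatrix_mul_submatrix]

lemma trace_matRpow_duality (ψ : A × B × C → ℂ) {α β : ℝ} (hab : α + β = 2) :
    (matRpow (trThird (vecMulVec ψ (star ψ))) α *
        matRpow ((1 : Matrix A A ℂ) ⊗ₖ trFst (trThird (vecMulVec ψ (star ψ)))) (1 - α)).trace =
      (matRpow (trSecond (vecMulVec ψ (star ψ))) β *
        matRpow ((1 : Matrix A A ℂ) ⊗ₖ trFstSnd (vecMulVec ψ (star ψ))) (1 - β)).trace := by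
  have hρ := isHermitian_vecMulVec_star ψ
  have one_sub_β : 1 - β = α - 1 := by linarith
  have β_sub_one : β - 1 = 1 - α := by linarith
  rw [matRpow_one_kronecker (isHermitian_trFst (isHermitian_trThird hρ)),
    matRpow_one_kronecker (isHermitian_trFstSnd hρ), trace_matRpow_trThird_mul_kronecker,
    trace_matRpow_trSecond_mul_kronecker, β_sub_one, one_sub_β]

theorem duality_down_general (ψ : A × B × C → ℂ) (_hψ : ψ ≠ 0) {α β : ℝ} (hab : α + β = 2)
    (hα1 : α ≠ 1) :
    -(renyiDiv α (trThird (vecMulVec ψ (star ψ)))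
        ((1 : Matrix A A ℂ) ⊗ₖ trFst (trThird (vecMulVec ψ (star ψ))))) +
    -(renyiDiv β (trSecond (vecMulVec ψ (star ψ)))
        ((1 : Matrix A A ℂ) ⊗ₖ trFstSnd (vecMulVec ψ (star ψ)))) = 0 := by
  have α_sub_one_ne_zero : α - 1 ≠ 0 := sub_ne_zero.2 hα1
  have β_sub_one : β - 1 = -(α - 1) := by linarith
  rw [renyiDiv, renyiDiv, trace_matRpow_duality ψ hab, β_sub_one]
  field_simp
  ring

end Tripartite

theorem duality_down {A B C : Type*}
    [Fintype A] [DecidableEq A] [Fintype B] [DecidableEq B] [Fintype C] [DecidableEq C]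
    (ψ : A × B × C → ℂ) (hψ : star ψ ⬝ᵥ ψ = 1)
    (α β : ℝ) (hα : α ∈ Set.Ioo (0 : ℝ) 2) (hβ : β ∈ Set.Ioo (0 : ℝ) 2)
    (hab : α + β = 2) (hα1 : α ≠ 1) :
    -(renyiDiv α (trThird (vecMulVec ψ (star ψ)))
        ((1 : Matrix A A ℂ) ⊗ₖ trFst (trThird (vecMulVec ψ (star ψ))))) +
    -(renyiDiv β (trSecond (vecMulVec ψ (star ψ)))
        ((1 : Matrix A A ℂ) ⊗ₖ trFstSnd (vecMulVec ψ (star ψ)))) = 0 := by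
  have hψ0 : ψ ≠ 0 := by
    rintro rfl
    simp at hψ
  exact duality_down_general ψ hψ0 hab hα1
end

section
/- Let ρ_AB be a density matrix on a bipartite space and α ∈ [1/2,1)∪(1,∞). Then H_α^↑(A|B)_ρ ≤ H̃_α^↑(A|B)_ρ ≤ H^↑_{2−1/α}(A|B)_ρ, where H_γ^↑(A|B)_ρ (resp. H̃_γ^↑(A|B)_ρ) is the supremum over density matrices σ_B of −D_γ(ρ_AB ‖ 1_A ⊗ σ_B) (resp. −D̃_γ(ρ_AB ‖ 1_A ⊗ σ_B)); for γ > 1 the suprema are over σ_B whose kernel is contained in that of ρ_B. -/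
open scoped Kronecker ComplexOrder
open Matrix

/-- `H_γ^↑(A|B)_ρ`: supremum over density matrices `σ_B` of `−D_γ(ρ_AB ‖ 1_A ⊗ σ_B)`
(for `γ > 1` over those `σ_B` whose kernel is contained in that of `ρ_B`). -/
noncomputable def condRenyiUp {a b : Type*} [Fintype a] [DecidableEq a] [Fintype b] [DecidableEq b]
    (gamma : ℝ) (ρ : Matrix (a × b) (a × b) ℂ) : ℝ :=
  sSup {x : ℝ | ∃ σ : Matrix b b ℂ, σ.PosSemidef ∧ σ.trace = 1 ∧
    (1 < gamma → LinearMap.ker σ.mulVecLin ≤ LinearMap.ker (trFst ρ).mulVecLin) ∧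
    x = -renyiDiv gamma ρ ((1 : Matrix a a ℂ) ⊗ₖ σ)}

/-- `H̃_γ^↑(A|B)_ρ`: supremum over density matrices `σ_B` of `−D̃_γ(ρ_AB ‖ 1_A ⊗ σ_B)`
(for `γ > 1` over those `σ_B` whose kernel is contained in that of `ρ_B`). -/
noncomputable def condSandwichedRenyiUp {a b : Type*} [Fintype a] [DecidableEq a] [Fintype b] [DecidableEq b]
    (gamma : ℝ) (ρ : Matrix (a × b) (a × b) ℂ) : ℝ :=
  sSup {x : ℝ | ∃ σ : Matrix b b ℂ, σ.PosSemidef ∧ σ.trace = 1 ∧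
    (1 < gamma → LinearMap.ker σ.mulVecLin ≤ LinearMap.ker (trFst ρ).mulVecLin) ∧
    x = -sandwichedRenyiDiv gamma ρ ((1 : Matrix a a ℂ) ⊗ₖ σ)}

/-!
The first inequality is the Araki–Lieb–Thirring comparison of `tr ρ ^ α σ ^ (1 - α)` with the
sandwiched trace, applied to each `σ_B` separately. In terms of Schatten norms it reads
`‖A ^ (c t) B ^ (d t)‖_(p/t) ^ (p/t) ≤ ‖A ^ c B ^ d‖_p ^ p` for `1 ≤ p` and `0 < t ≤ 1`, and it
follows from Hadamard's three lines theorem for `z ↦ tr (A ^ (c z) B ^ (d z) Kᴴ Q ^ w)`, where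
`X = A ^ (c t) B ^ (d t)` has polar decomposition `X = Q ^ (1/2) K`, `Q = X Xᴴ`, and `w` is affine
in `z`; at `z = t` the trace equals `tr Q ^ (p / (2 t))`.

For the second inequality put `Q = ρ ^ (1/2) σ ^ (1/α - 1) ρ ^ (1/2)`. Then `D̃_α` is governed by
`tr Q ^ α` and `D_(2 - 1/α)` by `tr Q ρ ^ (1 - 1/α)`, and `tr ρ = 1` turns Hölder's inequality
(`α > 1`) or its reverse (`α < 1`, obtained by combining Cauchy–Schwarz with Hölder) into the
desired comparison. The same two inequalities give `-D_γ(ρ ‖ 1 ⊗ σ) ≤ log |A|`, so all the suprema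
are finite.
-/

section Holder

theorem sum_mul_rpow_mul_rpow_le {ι : Type*} (s : Finset ι) {w x y : ι → ℝ} {u v : ℝ}
    (hw : ∀ i, 0 ≤ w i) (hx : ∀ i, 0 ≤ x i) (hy : ∀ i, 0 ≤ y i)
    (hu : 0 ≤ u) (hv : 0 ≤ v) (huv : u + v = 1) :
    ∑ i ∈ s, w i * (x i ^ u * y i ^ v) ≤ (∑ i ∈ s, w i * x i) ^ u * (∑ i ∈ s, w i * y i) ^ v := by
  rcases hu.eq_or_lt with rfl | hu'
  · obtain rfl : v = 1 := by linarith
    simp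
  rcases hv.eq_or_lt with rfl | hv'
  · obtain rfl : u = 1 := by linarith
    simp
  have hconj : (1 / u).HolderConjugate (1 / v) := by
    rw [Real.holderConjugate_iff, lt_div_iff₀ hu']
    exact ⟨by linarith, by simpa using huv⟩
  have rpow_inv_cancel {a r : ℝ} (ha : 0 ≤ a) (hr : 0 < r) : (a ^ r) ^ (1 / r) = a := by
    rw [← Real.rpow_mul ha, mul_one_div_cancel hr.ne', Real.rpow_one]
  have split_weight (i : ι) :
      w i * (x i ^ u * y i ^ v) = (w i * x i) ^ u * (w i * y i) ^ v := by
    rw [Real.mul_rpow (hw i) (hx i), Real.mul_rpow (hw i) (hy i), mul_mul_mul_comm,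
      ← Real.rpow_add_of_nonneg (hw i) hu hv, huv, Real.rpow_one]
  have holder := Real.inner_le_Lp_mul_Lq_of_nonneg s hconj
    (f := fun i => (w i * x i) ^ u) (g := fun i => (w i * y i) ^ v)
    (fun i _ => Real.rpow_nonneg (mul_nonneg (hw i) (hx i)) _)
    (fun i _ => Real.rpow_nonneg (mul_nonneg (hw i) (hy i)) _)
  simpa only [split_weight, rpow_inv_cancel (mul_nonneg (hw _) (hx _)) hu',
    rpow_inv_cancel (mul_nonneg (hw _) (hy _)) hv', one_div_one_div] using holder

theorem sum_sum_mul_rpow_mul_rpow_le {ι κ : Type*} [Fintype ι] [Fintype κ]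
    {w : ι → κ → ℝ} {x : ι → ℝ} {y : κ → ℝ} {u v : ℝ}
    (hw : ∀ i j, 0 ≤ w i j) (hrow : ∀ i, ∑ j, w i j ≤ 1) (hcol : ∀ j, ∑ i, w i j ≤ 1)
    (hx : ∀ i, 0 ≤ x i) (hy : ∀ j, 0 ≤ y j) (hu : 0 ≤ u) (hv : 0 ≤ v) (huv : u + v = 1) :
    ∑ i, ∑ j, w i j * (x i ^ u * y j ^ v) ≤ (∑ i, x i) ^ u * (∑ j, y j) ^ v := by
  have row_le : ∑ i, ∑ j, w i j * x i ≤ ∑ i, x i := Finset.sum_le_sum fun i _ => by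
    rw [← Finset.sum_mul]
    exact mul_le_of_le_one_left (hx i) (hrow i)
  have col_le : ∑ i, ∑ j, w i j * y j ≤ ∑ j, y j := by
    rw [Finset.sum_comm]
    refine Finset.sum_le_sum fun j _ => ?_
    rw [← Finset.sum_mul]
    exact mul_le_of_le_one_left (hy j) (hcol j)
  have holder := sum_mul_rpow_mul_rpow_le (Finset.univ : Finset (ι × κ))
    (w := fun p => w p.1 p.2) (x := fun p => x p.1) (y := fun p => y p.2)
    (fun _ => hw _ _) (fun _ => hx _) (fun _ => hy _) hu hv huv
  simp only [Fintype.sum_prod_type] at holder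
  have rows_nonneg : 0 ≤ ∑ i, ∑ j, w i j * x i :=
    Finset.sum_nonneg fun i _ => Finset.sum_nonneg fun j _ => mul_nonneg (hw i j) (hx i)
  have cols_nonneg : 0 ≤ ∑ i, ∑ j, w i j * y j :=
    Finset.sum_nonneg fun i _ => Finset.sum_nonneg fun j _ => mul_nonneg (hw i j) (hy j)
  have := Finset.sum_nonneg fun i (_ : i ∈ Finset.univ) => hx i
  exact holder.trans (by gcongr)

end Holder

section ContractionEntries

open scoped Matrix.Norms.L2Operator

variable {m n : Type*} [Fintype m] [Fintype n] [DecidableEq n]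

theorem sum_norm_sq_col_le_one {K : Matrix m n ℂ} (hK : ‖K‖ ≤ 1) (j : n) :
    ∑ i, ‖K i j‖ ^ 2 ≤ 1 := by
  have h := Matrix.l2_opNorm_mulVec K (EuclideanSpace.single j (1 : ℂ))
  rw [PiLp.norm_single, norm_one, mul_one] at h
  have h_sq := pow_le_one₀ (n := 2) (norm_nonneg _) (h.trans hK)
  rw [EuclideanSpace.norm_sq_eq] at h_sq
  simpa using h_sq

theorem sum_norm_sq_row_le_one {K : Matrix m n ℂ} (hK : ‖K‖ ≤ 1) (i : m) :
    ∑ j, ‖K i j‖ ^ 2 ≤ 1 := by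
  classical
  have h := sum_norm_sq_col_le_one (K := Kᴴ) (by rwa [Matrix.l2_opNorm_conjTranspose]) i
  simpa only [Matrix.conjTranspose_apply, norm_star] using h

theorem norm_trace_diagonal_mul_le [DecidableEq m] {K : Matrix m n ℂ} {L : Matrix n m ℂ}
    (hK : ‖K‖ ≤ 1) (hL : ‖L‖ ≤ 1) {p : m → ℂ} {q : n → ℂ} {x : m → ℝ} {y : n → ℝ} {u v : ℝ}
    (hx : ∀ i, 0 ≤ x i) (hy : ∀ j, 0 ≤ y j) (hu : 0 ≤ u) (hv : 0 ≤ v) (huv : u + v = 1)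
    (hp : ∀ i, ‖p i‖ ≤ x i ^ u) (hq : ∀ j, ‖q j‖ ≤ y j ^ v) :
    ‖(diagonal p * K * diagonal q * L).trace‖ ≤ (∑ i, x i) ^ u * (∑ j, y j) ^ v := by
  have trace_eq : (diagonal p * K * diagonal q * L).trace
      = ∑ i, ∑ j, p i * K i j * q j * L j i := by
    simp [Matrix.trace, Matrix.mul_apply, Matrix.diagonal_apply]
  have term_le (i : m) (j : n) : ‖p i * K i j * q j * L j i‖
      ≤ (‖K i j‖ ^ 2 + ‖L j i‖ ^ 2) / 2 * (x i ^ u * y j ^ v) := by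
    calc ‖p i * K i j * q j * L j i‖ = (‖K i j‖ * ‖L j i‖) * (‖p i‖ * ‖q j‖) := by
          simp only [norm_mul]; ring
      _ ≤ (‖K i j‖ ^ 2 + ‖L j i‖ ^ 2) / 2 * (x i ^ u * y j ^ v) := by
          have amgm : ‖K i j‖ * ‖L j i‖ ≤ (‖K i j‖ ^ 2 + ‖L j i‖ ^ 2) / 2 := by
            linarith [two_mul_le_add_sq ‖K i j‖ ‖L j i‖]
          have := Real.rpow_nonneg (hx i) u
          gcongr
          exacts [hp i, hq j]
  calc ‖(diagonal p * K * diagonal q * L).trace‖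
      ≤ ∑ i, ∑ j, ‖p i * K i j * q j * L j i‖ := by
        rw [trace_eq]
        exact (norm_sum_le _ _).trans (Finset.sum_le_sum fun i _ => norm_sum_le _ _)
    _ ≤ ∑ i, ∑ j, (‖K i j‖ ^ 2 + ‖L j i‖ ^ 2) / 2 * (x i ^ u * y j ^ v) :=
        Finset.sum_le_sum fun i _ => Finset.sum_le_sum fun j _ => term_le i j
    _ ≤ (∑ i, x i) ^ u * (∑ j, y j) ^ v := by
        refine sum_sum_mul_rpow_mul_rpow_le (fun i j => by positivity) (fun i => ?_)
          (fun j => ?_) hx hy hu hv huv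
        · rw [← Finset.sum_div, Finset.sum_add_distrib]
          linarith [sum_norm_sq_row_le_one hK i, sum_norm_sq_col_le_one hL i]
        · rw [← Finset.sum_div, Finset.sum_add_distrib]
          linarith [sum_norm_sq_col_le_one hK j, sum_norm_sq_row_le_one hL j]

end ContractionEntries

section MatrixPowers

variable {n : Type*} [Fintype n] [DecidableEq n]

/-- The complex power `x ^ z` on the support: `0` at `x = 0`, even for `z = 0`. -/
noncomputable def suppCpow (z : ℂ) (x : ℝ) : ℂ := if x = 0 then 0 else (x : ℂ) ^ z

/-- The complex power `A ^ z` of a Hermitian matrix on its support, extending `matRpow` to complex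
exponents; junk value `0` if `A` is not Hermitian. -/
noncomputable def matCpow (A : Matrix n n ℂ) (z : ℂ) : Matrix n n ℂ :=
  if hA : A.IsHermitian then
    Unitary.conjStarAlgAut ℂ _ hA.eigenvectorUnitary
      (diagonal fun i => suppCpow z (hA.eigenvalues i))
  else 0

theorem suppCpow_mul_suppCpow (z w : ℂ) (x : ℝ) :
    suppCpow z x * suppCpow w x = suppCpow (z + w) x := by
  unfold suppCpow
  split_ifs with hx
  · exact mul_zero 0
  · exact (Complex.cpow_add _ _ (Complex.ofReal_ne_zero.mpr hx)).symm

theorem suppCpow_one (x : ℝ) : suppCpow 1 x = x := by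
  unfold suppCpow
  split_ifs with hx <;> simp [hx]

theorem suppCpow_ofReal {x : ℝ} (hx : 0 ≤ x) (t : ℝ) :
    suppCpow t x = ((if x = 0 then 0 else x ^ t : ℝ) : ℂ) := by
  unfold suppCpow
  split_ifs
  · exact Complex.ofReal_zero.symm
  · exact (Complex.ofReal_cpow hx t).symm

theorem norm_suppCpow {x : ℝ} (hx : 0 ≤ x) (z : ℂ) :
    ‖suppCpow z x‖ = if x = 0 then 0 else x ^ z.re := by
  unfold suppCpow
  split_ifs with h
  · exact norm_zero
  · exact Complex.norm_cpow_eq_rpow_re_of_pos (hx.lt_of_ne' h) z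

theorem norm_suppCpow_le_one {x : ℝ} (hx : 0 ≤ x) {z : ℂ} (hz : z.re = 0) :
    ‖suppCpow z x‖ ≤ 1 := by
  rw [norm_suppCpow hx, hz, Real.rpow_zero]
  split_ifs <;> norm_num

theorem matCpow_of_isHermitian {A : Matrix n n ℂ} (hA : A.IsHermitian) (z : ℂ) :
    matCpow A z = Unitary.conjStarAlgAut ℂ _ hA.eigenvectorUnitary
      (diagonal fun i => suppCpow z (hA.eigenvalues i)) :=
  dif_pos hA

theorem matCpow_mul_matCpow (A : Matrix n n ℂ) (z w : ℂ) :
    matCpow A z * matCpow A w = matCpow A (z + w) := by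
  unfold matCpow
  split_ifs
  · simp only [← map_mul, diagonal_mul_diagonal, suppCpow_mul_suppCpow]
  · exact mul_zero 0

theorem matCpow_one {A : Matrix n n ℂ} (hA : A.IsHermitian) : matCpow A 1 = A := by
  conv_rhs => rw [hA.spectral_theorem]
  simp only [matCpow_of_isHermitian hA, suppCpow_one]
  rfl

theorem matRpow_eq_matCpow {A : Matrix n n ℂ} (hA : A.PosSemidef) (t : ℝ) :
    matRpow A t = matCpow A t := by
  simp only [matRpow, dif_pos hA.1, matCpow_of_isHermitian hA.1, Unitary.conjStarAlgAut_apply,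
    suppCpow_ofReal (hA.eigenvalues_nonneg _)]

theorem matRpow_mul_matRpow {A : Matrix n n ℂ} (hA : A.PosSemidef) (s t : ℝ) :
    matRpow A s * matRpow A t = matRpow A (s + t) := by
  simp only [matRpow_eq_matCpow hA, matCpow_mul_matCpow, Complex.ofReal_add]

theorem matRpow_one {A : Matrix n n ℂ} (hA : A.PosSemidef) : matRpow A 1 = A := by
  rw [matRpow_eq_matCpow hA, Complex.ofReal_one, matCpow_one hA.1]

theorem conjTranspose_matRpow (A : Matrix n n ℂ) (t : ℝ) : (matRpow A t)ᴴ = matRpow A t := by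
  unfold matRpow
  split_ifs
  · rw [star_eq_conjTranspose]
    refine isHermitian_mul_mul_conjTranspose _ (isHermitian_diagonal_of_self_adjoint _ ?_)
    ext i
    exact Complex.conj_ofReal _
  · exact conjTranspose_zero

theorem matRpow_mul_self {A : Matrix n n ℂ} (hA : A.PosSemidef) (t : ℝ) :
    matRpow A t * A = matRpow A (t + 1) := by
  simpa only [matRpow_one hA] using matRpow_mul_matRpow hA t 1

theorem matRpow_zero_mul_self {A : Matrix n n ℂ} (hA : A.PosSemidef) : matRpow A 0 * A = A := by
  rw [matRpow_mul_self hA, zero_add, matRpow_one hA]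

theorem self_mul_matRpow_zero {A : Matrix n n ℂ} (hA : A.PosSemidef) : A * matRpow A 0 = A := by
  simpa only [matRpow_one hA, add_zero] using matRpow_mul_matRpow hA 1 0

theorem trace_matRpow {A : Matrix n n ℂ} (hA : A.IsHermitian) (t : ℝ) :
    (matRpow A t).trace
      = ((∑ i, if hA.eigenvalues i = 0 then 0 else hA.eigenvalues i ^ t : ℝ) : ℂ) := by
  rw [matRpow, dif_pos hA, Matrix.trace_mul_comm, ← mul_assoc, Unitary.coe_star_mul_self, one_mul,
    trace_diagonal, Complex.ofReal_sum]

theorem rpow_of_ne_zero_nonneg {x : ℝ} (hx : 0 ≤ x) (t : ℝ) : 0 ≤ if x = 0 then 0 else x ^ t := by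
  split_ifs
  exacts [le_rfl, Real.rpow_nonneg hx t]

theorem trace_matRpow_nonneg {A : Matrix n n ℂ} (hA : A.PosSemidef) (t : ℝ) :
    0 ≤ (matRpow A t).trace.re := by
  rw [trace_matRpow hA.1, Complex.ofReal_re]
  exact Finset.sum_nonneg fun i _ => rpow_of_ne_zero_nonneg (hA.eigenvalues_nonneg i) t

theorem trace_matRpow_mul_conjTranspose_comm (X : Matrix n n ℂ) (t : ℝ) :
    (matRpow (X * Xᴴ) t).trace = (matRpow (Xᴴ * X) t).trace := by
  have hX := isHermitian_mul_conjTranspose_self X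
  have hX' := isHermitian_conjTranspose_mul_self X
  rw [trace_matRpow hX, trace_matRpow hX',
    (hX.eigenvalues_eq_eigenvalues_iff hX').mpr (charpoly_mul_comm X Xᴴ)]

end MatrixPowers

section TraceInequalities

open scoped Matrix.Norms.L2Operator

variable {n : Type*} [Fintype n] [DecidableEq n] {A B K L : Matrix n n ℂ}

theorem norm_matCpow_le_one (hA : A.PosSemidef) {z : ℂ} (hz : z.re = 0) : ‖matCpow A z‖ ≤ 1 := by
  rw [matCpow_of_isHermitian hA.1, Unitary.conjStarAlgAut_apply, ← Unitary.coe_star,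
    CStarRing.norm_mul_coe_unitary, CStarRing.norm_coe_unitary_mul, l2_opNorm_diagonal]
  exact (pi_norm_le_iff_of_nonneg zero_le_one).2 fun i =>
    norm_suppCpow_le_one (hA.eigenvalues_nonneg i) hz

theorem norm_mul_le_one (hK : ‖K‖ ≤ 1) (hL : ‖L‖ ≤ 1) : ‖K * L‖ ≤ 1 :=
  (l2_opNorm_mul K L).trans (mul_le_one₀ hK (norm_nonneg _) hL)

theorem norm_suppCpow_le_rpow {x : ℝ} (hx : 0 ≤ x) {z : ℂ} {p u : ℝ} (hz : z.re = p * u) :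
    ‖suppCpow z x‖ ≤ (if x = 0 then 0 else x ^ p) ^ u := by
  rw [norm_suppCpow hx, hz]
  split_ifs
  · exact Real.rpow_nonneg le_rfl u
  · exact (Real.rpow_mul hx p u).le

theorem norm_trace_matCpow_mul_le (hA : A.PosSemidef) (hB : B.PosSemidef)
    (hK : ‖K‖ ≤ 1) (hL : ‖L‖ ≤ 1) {p q u v : ℝ} {z w : ℂ} (hu : 0 ≤ u) (hv : 0 ≤ v)
    (huv : u + v = 1) (hz : z.re = p * u) (hw : w.re = q * v) :
    ‖(matCpow A z * K * matCpow B w * L).trace‖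
      ≤ (matRpow A p).trace.re ^ u * (matRpow B q).trace.re ^ v := by
  set U := hA.1.eigenvectorUnitary
  set V := hB.1.eigenvectorUnitary
  have diagonalised : (matCpow A z * K * matCpow B w * L).trace
      = (diagonal (fun i => suppCpow z (hA.1.eigenvalues i)) * ((star U : Matrix n n ℂ) * K * V)
        * diagonal (fun i => suppCpow w (hB.1.eigenvalues i))
        * ((star V : Matrix n n ℂ) * L * U)).trace := by
    rw [matCpow_of_isHermitian hA.1, matCpow_of_isHermitian hB.1,
      Unitary.conjStarAlgAut_apply, Unitary.conjStarAlgAut_apply,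
      ← mul_assoc _ _ (U : Matrix n n ℂ),
      Matrix.trace_mul_comm _ (U : Matrix n n ℂ)]
    simp only [mul_assoc]
    rfl
  rw [diagonalised, trace_matRpow hA.1, trace_matRpow hB.1, Complex.ofReal_re, Complex.ofReal_re]
  refine norm_trace_diagonal_mul_le ?_ ?_
    (fun i => rpow_of_ne_zero_nonneg (hA.eigenvalues_nonneg i) p)
    (fun i => rpow_of_ne_zero_nonneg (hB.eigenvalues_nonneg i) q) hu hv huv
    (fun i => norm_suppCpow_le_rpow (hA.eigenvalues_nonneg i) hz)
    (fun i => norm_suppCpow_le_rpow (hB.eigenvalues_nonneg i) hw)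
  · rwa [← Unitary.coe_star, CStarRing.norm_mul_coe_unitary, CStarRing.norm_coe_unitary_mul]
  · rwa [← Unitary.coe_star, CStarRing.norm_mul_coe_unitary, CStarRing.norm_coe_unitary_mul]

theorem trace_matRpow_mul_matRpow_le (hA : A.PosSemidef) (hB : B.PosSemidef) {p q u v : ℝ}
    (hu : 0 ≤ u) (hv : 0 ≤ v) (huv : u + v = 1) :
    (matRpow A (p * u) * matRpow B (q * v)).trace.re
      ≤ (matRpow A p).trace.re ^ u * (matRpow B q).trace.re ^ v := by
  have holder := norm_trace_matCpow_mul_le hA hB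
    (norm_matCpow_le_one hA Complex.zero_re) (norm_matCpow_le_one hB Complex.zero_re)
    (z := ((p * u : ℝ) : ℂ)) (w := ((q * v : ℝ) : ℂ)) hu hv huv
    (Complex.ofReal_re _) (Complex.ofReal_re _)
  rw [mul_assoc, matCpow_mul_matCpow, matCpow_mul_matCpow, add_zero, add_zero,
    ← matRpow_eq_matCpow hA, ← matRpow_eq_matCpow hB] at holder
  exact (Complex.re_le_norm _).trans holder

theorem matRpow_zero_mul_eq_self (X : Matrix n n ℂ) : matRpow (X * Xᴴ) 0 * X = X := by
  set P := matRpow (X * Xᴴ) 0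
  have hP : P * (X * Xᴴ) = X * Xᴴ := matRpow_zero_mul_self (posSemidef_self_mul_conjTranspose X)
  have hsq : (X - P * X) * (X - P * X)ᴴ = 0 := by
    rw [conjTranspose_sub, conjTranspose_mul, conjTranspose_matRpow]
    calc (X - P * X) * (Xᴴ - Xᴴ * P) = (X * Xᴴ - P * (X * Xᴴ)) * (1 - P) := by noncomm_ring
      _ = 0 := by rw [hP, sub_self, zero_mul]
  exact (sub_eq_zero.mp (self_mul_conjTranspose_eq_zero.mp hsq)).symm

theorem exists_polar_decomposition (X : Matrix n n ℂ) :
    ∃ K : Matrix n n ℂ, ‖K‖ ≤ 1 ∧ matRpow (X * Xᴴ) (1 / 2) * K = X ∧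
      X * Kᴴ = matRpow (X * Xᴴ) (1 / 2) := by
  have hXX := posSemidef_self_mul_conjTranspose X
  set K := matRpow (X * Xᴴ) (-(1 / 2)) * X with hK
  have polar_star : X * Kᴴ = matRpow (X * Xᴴ) (1 / 2) := by
    rw [hK, conjTranspose_mul, conjTranspose_matRpow, ← mul_assoc]
    calc X * Xᴴ * matRpow (X * Xᴴ) (-(1 / 2))
        = matRpow (X * Xᴴ) 1 * matRpow (X * Xᴴ) (-(1 / 2)) := by rw [matRpow_one hXX]
      _ = matRpow (X * Xᴴ) (1 / 2) := by rw [matRpow_mul_matRpow hXX]; norm_num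
  have hKK : K * Kᴴ = matRpow (X * Xᴴ) 0 := by
    rw [hK, mul_assoc, polar_star, matRpow_mul_matRpow hXX, neg_add_cancel]
  have norm_sq_le : ‖K‖ * ‖K‖ ≤ 1 := by
    rw [← l2_opNorm_conjTranspose K, ← l2_opNorm_conjTranspose_mul_self,
      conjTranspose_conjTranspose, hKK, matRpow_eq_matCpow hXX]
    exact norm_matCpow_le_one hXX (by simp)
  refine ⟨K, by nlinarith [norm_nonneg K], ?_, polar_star⟩
  rw [hK, ← mul_assoc, matRpow_mul_matRpow hXX, add_neg_cancel, matRpow_zero_mul_eq_self]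

end TraceInequalities

section CauchySchwarz

theorem norm_trace_mul_sq_le {n : Type*} [Fintype n] (X Y : Matrix n n ℂ) :
    ‖(X * Y).trace‖ ^ 2 ≤ (X * Xᴴ).trace.re * (Yᴴ * Y).trace.re := by
  classical
  let _ := toMatrixSeminormedAddCommGroup (1 : Matrix n n ℂ) PosSemidef.one
  let _ := toMatrixInnerProductSpace (1 : Matrix n n ℂ) PosSemidef.one
  have cauchy_schwarz : ‖(X * 1 * Yᴴᴴ).trace‖ ≤ ‖Yᴴ‖ * ‖X‖ := norm_inner_le_norm (𝕜 := ℂ) Yᴴ X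
  have norm_sq_X : ‖X‖ ^ 2 = (X * 1 * Xᴴ).trace.re := norm_sq_eq_re_inner (𝕜 := ℂ) X
  have norm_sq_Y : ‖Yᴴ‖ ^ 2 = (Yᴴ * 1 * Yᴴᴴ).trace.re := norm_sq_eq_re_inner (𝕜 := ℂ) Yᴴ
  simp only [mul_one, conjTranspose_conjTranspose] at cauchy_schwarz norm_sq_X norm_sq_Y
  rw [← norm_sq_X, ← norm_sq_Y, ← mul_pow, mul_comm]
  gcongr

end CauchySchwarz

section ComplexInterpolation

open Asymptotics Filter Complex.HadamardThreeLines
open scoped Matrix.Norms.L2Operator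

variable {n : Type*} [Fintype n] [DecidableEq n]

theorem differentiable_suppCpow (x : ℝ) : Differentiable ℂ fun z => suppCpow z x := by
  unfold suppCpow
  split_ifs with hx
  · exact differentiable_const 0
  · exact differentiable_id.const_cpow (Or.inl (Complex.ofReal_ne_zero.mpr hx))

theorem differentiable_matCpow (A : Matrix n n ℂ) : Differentiable ℂ (matCpow A) := by
  by_cases hA : A.IsHermitian
  · let conj :=
      (Unitary.conjStarAlgAut ℂ (Matrix n n ℂ) hA.eigenvectorUnitary).toAlgEquiv.toLinearMap
    have linear_in_eigenvalues : matCpow A = fun z =>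
        (conj ∘ₗ diagonalLinearMap n ℂ ℂ).toContinuousLinearMap
          fun i => suppCpow z (hA.eigenvalues i) :=
      funext fun z => matCpow_of_isHermitian hA z
    rw [linear_in_eigenvalues]
    exact (ContinuousLinearMap.differentiable _).comp
      (differentiable_pi.mpr fun i => differentiable_suppCpow _)
  · have eq_zero : matCpow A = fun _ => 0 := funext fun z => dif_neg hA
    rw [eq_zero]
    exact differentiable_const 0

theorem norm_matCpow_le_norm_matCpow_re {A : Matrix n n ℂ} (hA : A.PosSemidef) (z : ℂ) :
    ‖matCpow A z‖ ≤ ‖matCpow A (z.re : ℂ)‖ := by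
  calc ‖matCpow A z‖ = ‖matCpow A (z.re : ℂ) * matCpow A (z - z.re)‖ := by
        rw [matCpow_mul_matCpow, add_sub_cancel]
    _ ≤ ‖matCpow A (z.re : ℂ)‖ * ‖matCpow A (z - z.re)‖ := l2_opNorm_mul _ _
    _ ≤ ‖matCpow A (z.re : ℂ)‖ :=
        mul_le_of_le_one_right (norm_nonneg _) (norm_matCpow_le_one hA (by simp))

theorem matCpow_isBigO_one {A : Matrix n n ℂ} (hA : A.PosSemidef) (c d : ℝ) :
    (fun z => matCpow A (c * z + d))
      =O[𝓟 (verticalClosedStrip 0 1)] fun _ => (1 : ℝ) := by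
  have cont : Continuous fun x : ℝ => matCpow A (c * x + d) :=
    (differentiable_matCpow A).continuous.comp (by fun_prop)
  obtain ⟨C, hC⟩ := isCompact_Icc.exists_bound_of_continuousOn (s := Set.Icc (0 : ℝ) 1)
    cont.continuousOn
  rw [isBigO_one_iff]
  refine isBoundedUnder_of_eventually_le (a := C) (eventually_principal.mpr fun z hz => ?_)
  refine (norm_matCpow_le_norm_matCpow_re hA _).trans ?_
  simpa using hC z.re hz

theorem norm_trace_interp_le {A B Q : Matrix n n ℂ} (hA : A.PosSemidef) (hB : B.PosSemidef)
    (hQ : Q.PosSemidef) (K : Matrix n n ℂ) (c d e f : ℝ) {a b t : ℝ} (ht : t ∈ Set.Icc (0 : ℝ) 1)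
    (h_zero : ∀ z : ℂ, z.re = 0 →
      ‖(matCpow A (c * z) * matCpow B (d * z) * K * matCpow Q (e * z + f)).trace‖ ≤ a)
    (h_one : ∀ z : ℂ, z.re = 1 →
      ‖(matCpow A (c * z) * matCpow B (d * z) * K * matCpow Q (e * z + f)).trace‖ ≤ b) :
    ‖(matCpow A (c * t) * matCpow B (d * t) * K * matCpow Q (e * t + f)).trace‖
      ≤ a ^ (1 - t) * b ^ t := by
  let F : ℂ → Matrix n n ℂ :=
    fun z => matCpow A (c * z) * matCpow B (d * z) * K * matCpow Q (e * z + f)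
  have F_diff : Differentiable ℂ F :=
    ((((differentiable_matCpow A).fun_comp (by fun_prop)).fun_mul
      ((differentiable_matCpow B).fun_comp (by fun_prop))).fun_mul (differentiable_const K)).fun_mul
      ((differentiable_matCpow Q).fun_comp (by fun_prop))
  have F_bdd : F =O[𝓟 (verticalClosedStrip 0 1)] fun _ => (1 : ℝ) := by
    simpa using (((matCpow_isBigO_one hA c 0).mul (matCpow_isBigO_one hB d 0)).mul
      (isBigO_const_const K one_ne_zero _)).mul (matCpow_isBigO_one hQ e f)
  let tr : Matrix n n ℂ →L[ℂ] ℂ := (traceLinearMap n ℂ ℂ).toContinuousLinearMap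
  obtain ⟨C, hC⟩ := ((tr.isBigO_comp F _).trans F_bdd).bound
  have trF_bdd : BddAbove ((norm ∘ fun z => tr (F z)) '' verticalClosedStrip 0 1) := by
    refine ⟨C, Set.forall_mem_image.mpr fun z hz => ?_⟩
    simpa using eventually_principal.mp hC z hz
  exact norm_le_interp_of_mem_verticalClosedStrip₀₁' (fun z => tr (F z)) (z := t)
    (by simpa [verticalClosedStrip] using ht) (tr.differentiable.comp F_diff).diffContOnCl
    trF_bdd h_zero h_one

end ComplexInterpolation

section ArakiLiebThirring

open scoped Matrix.Norms.L2Operator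

variable {n : Type*} [Fintype n] [DecidableEq n]

/-- `‖X‖_p ^ p` for the Schatten `p`-(quasi)norm. -/
noncomputable def schattenSum (p : ℝ) (X : Matrix n n ℂ) : ℝ :=
  (matRpow (X * Xᴴ) (p / 2)).trace.re

theorem schattenSum_nonneg (p : ℝ) (X : Matrix n n ℂ) : 0 ≤ schattenSum p X :=
  trace_matRpow_nonneg (posSemidef_self_mul_conjTranspose X) _

theorem norm_trace_le_of_re_eq_zero {A B Q K : Matrix n n ℂ} (hA : A.PosSemidef)
    (hB : B.PosSemidef) (hQ : Q.PosSemidef) (hK : ‖K‖ ≤ 1) (c d : ℝ) {q : ℝ} {z w : ℂ}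
    (hz : z.re = 0) (hw : w.re = q) :
    ‖(matCpow A (c * z) * matCpow B (d * z) * K * matCpow Q w).trace‖ ≤ (matRpow Q q).trace.re := by
  have holder := norm_trace_matCpow_mul_le (p := 1) (q := q) (u := 0) (v := 1) (z := c * z)
    (w := w) hA hQ (norm_mul_le_one (norm_matCpow_le_one hB (z := d * z) (by simp [hz])) hK)
    (norm_matCpow_le_one hQ Complex.zero_re) le_rfl zero_le_one (zero_add 1)
    (by simp [hz]) (by simp [hw])
  rwa [Real.rpow_zero, one_mul, Real.rpow_one, mul_assoc _ _ (matCpow Q 0), matCpow_mul_matCpow,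
    add_zero, ← mul_assoc] at holder

theorem norm_trace_le_of_re_eq_one {A B Q K : Matrix n n ℂ} (hA : A.PosSemidef)
    (hB : B.PosSemidef) (hQ : Q.PosSemidef) (hK : ‖K‖ ≤ 1) (c d : ℝ) {p q : ℝ} (hp : 1 ≤ p)
    {z w : ℂ} (hz : z.re = 1) (hw : w.re = q * (1 - 1 / p)) :
    ‖(matCpow A (c * z) * matCpow B (d * z) * K * matCpow Q w).trace‖
      ≤ schattenSum p (matRpow A c * matRpow B d) ^ (1 / p)
        * (matRpow Q q).trace.re ^ (1 - 1 / p) := by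
  have hp₀ : 0 < p := zero_lt_one.trans_le hp
  set G := matRpow A c * matRpow B d with hG
  have hP := posSemidef_self_mul_conjTranspose G
  obtain ⟨L, hL, polar, -⟩ := exists_polar_decomposition G
  have factored : matCpow A (c * z) * matCpow B (d * z)
      = matCpow A (c * (z - 1)) * G * matCpow B (d * (z - 1)) := by
    rw [hG, matRpow_eq_matCpow hA, matRpow_eq_matCpow hB, ← mul_assoc, matCpow_mul_matCpow,
      mul_assoc, matCpow_mul_matCpow]
    congr 2 <;> ring
  have holder := norm_trace_matCpow_mul_le (p := p / 2) (q := q) (u := 1 / p) (v := 1 - 1 / p)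
    (z := ((1 / 2 : ℝ) : ℂ)) (w := w) hP hQ
    (norm_mul_le_one (norm_mul_le_one hL (norm_matCpow_le_one hB (z := d * (z - 1)) (by simp [hz])))
      hK)
    (norm_matCpow_le_one hA (z := c * (z - 1)) (by simp [hz])) (by positivity)
    (sub_nonneg.mpr ((div_le_one hp₀).mpr hp)) (add_sub_cancel _ _)
    (by rw [Complex.ofReal_re]; field_simp) hw
  rw [← matRpow_eq_matCpow hP, Matrix.trace_mul_comm, ← mul_assoc, ← mul_assoc, ← mul_assoc,
    ← mul_assoc _ L, mul_assoc _ _ L, polar, ← factored] at holder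
  exact holder

theorem le_of_le_rpow_mul_rpow {S T p t : ℝ} (hS : 0 ≤ S) (hT : 0 ≤ T) (hp : 0 < p) (ht : 0 < t)
    (h : T ≤ T ^ (1 - t) * (S ^ (1 / p) * T ^ (1 - 1 / p)) ^ t) : T ≤ S := by
  rcases hT.eq_or_lt with rfl | hT
  · exact hS
  have cancelled : T ^ (t / p) * T ^ (1 - t / p) ≤ S ^ (t / p) * T ^ (1 - t / p) := by
    calc T ^ (t / p) * T ^ (1 - t / p) = T := by
          rw [← Real.rpow_add hT, add_sub_cancel, Real.rpow_one]
      _ ≤ T ^ (1 - t) * (S ^ (1 / p) * T ^ (1 - 1 / p)) ^ t := h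
      _ = S ^ (1 / p * t) * (T ^ (1 - t) * T ^ ((1 - 1 / p) * t)) := by
          rw [Real.mul_rpow (Real.rpow_nonneg hS _) (Real.rpow_nonneg hT.le _),
            ← Real.rpow_mul hS, ← Real.rpow_mul hT.le, mul_left_comm]
      _ = S ^ (t / p) * T ^ (1 - t / p) := by
          rw [← Real.rpow_add hT]
          congr 2 <;> ring
  exact (Real.rpow_le_rpow_iff hT.le hS (by positivity)).mp
    (le_of_mul_le_mul_right cancelled (Real.rpow_pos_of_pos hT _))

theorem schattenSum_rpow_mul_rpow_le {A B : Matrix n n ℂ} (hA : A.PosSemidef) (hB : B.PosSemidef)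
    (c d : ℝ) {p t : ℝ} (hp : 1 ≤ p) (ht₀ : 0 < t) (ht₁ : t ≤ 1) :
    schattenSum (p / t) (matRpow A (c * t) * matRpow B (d * t))
      ≤ schattenSum p (matRpow A c * matRpow B d) := by
  have hp₀ : 0 < p := zero_lt_one.trans_le hp
  set X := matRpow A (c * t) * matRpow B (d * t) with hX
  have hQ := posSemidef_self_mul_conjTranspose X
  set Q := X * Xᴴ
  obtain ⟨K, hK, -, polar⟩ := exists_polar_decomposition X
  have hKs : ‖Kᴴ‖ ≤ 1 := by rwa [l2_opNorm_conjTranspose]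
  have interp := norm_trace_interp_le hA hB hQ Kᴴ c d (-(1 / (2 * t))) (p / t / 2)
    ⟨ht₀.le, ht₁⟩
    (fun z hz => norm_trace_le_of_re_eq_zero hA hB hQ hKs c d hz
      (q := p / t / 2) (by simp [hz]))
    (fun z hz => norm_trace_le_of_re_eq_one hA hB hQ hKs c d (q := p / t / 2) hp hz
      (by simp [hz]; field_simp; ring))
  have value_at_t : (matCpow A (c * t) * matCpow B (d * t) * Kᴴ
      * matCpow Q ((-(1 / (2 * t)) : ℝ) * t + (p / t / 2 : ℝ))).trace
      = (matRpow Q (p / t / 2)).trace := by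
    have exponent : ((-(1 / (2 * t)) : ℝ) : ℂ) * t + (p / t / 2 : ℝ)
        = ((p / t / 2 - 1 / 2 : ℝ) : ℂ) := by
      rw [← Complex.ofReal_mul, ← Complex.ofReal_add]
      congr 1
      field_simp
      ring
    rw [exponent, ← Complex.ofReal_mul, ← Complex.ofReal_mul, ← matRpow_eq_matCpow hA,
      ← matRpow_eq_matCpow hB, ← matRpow_eq_matCpow hQ, ← hX, polar, matRpow_mul_matRpow hQ,
      add_sub_cancel]
  rw [value_at_t] at interp
  exact le_of_le_rpow_mul_rpow (schattenSum_nonneg _ _) (schattenSum_nonneg _ _) hp₀ ht₀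
    ((Complex.re_le_norm _).trans interp)

end ArakiLiebThirring

section TraceFunctionals

variable {n : Type*} [Fintype n] [DecidableEq n] {A B ρ σ : Matrix n n ℂ}

theorem trace_matRpow_mul_matRpow_mul_conjTranspose (hA : A.PosSemidef) (hB : B.PosSemidef)
    (x y : ℝ) :
    (matRpow A x * matRpow B y * (matRpow A x * matRpow B y)ᴴ).trace
      = (matRpow A (2 * x) * matRpow B (2 * y)).trace := by
  rw [conjTranspose_mul, conjTranspose_matRpow, conjTranspose_matRpow, ← mul_assoc,
    Matrix.trace_mul_comm, two_mul, two_mul, ← matRpow_mul_matRpow hA, ← matRpow_mul_matRpow hB]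
  simp only [mul_assoc]

theorem trace_matRpow_mul_matRpow_eq (hA : A.PosSemidef) (hB : B.PosSemidef) (x y : ℝ) :
    (matRpow A x * matRpow B y).trace
      = (matRpow A (x / 2) * matRpow B (y / 2)
          * (matRpow A (x / 2) * matRpow B (y / 2))ᴴ).trace := by
  rw [trace_matRpow_mul_matRpow_mul_conjTranspose hA hB, mul_div_cancel₀ x two_ne_zero,
    mul_div_cancel₀ y two_ne_zero]

theorem trace_matRpow_mul_matRpow_nonneg (hA : A.PosSemidef) (hB : B.PosSemidef) (x y : ℝ) :
    0 ≤ (matRpow A x * matRpow B y).trace := by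
  rw [trace_matRpow_mul_matRpow_eq hA hB]
  exact (posSemidef_self_mul_conjTranspose _).trace_nonneg

theorem trace_matRpow_re_eq_zero_iff (hA : A.PosSemidef) (t : ℝ) :
    (matRpow A t).trace.re = 0 ↔ A = 0 := by
  rw [trace_matRpow hA.1, Complex.ofReal_re, Finset.sum_eq_zero_iff_of_nonneg fun i _ =>
    rpow_of_ne_zero_nonneg (hA.eigenvalues_nonneg i) t, ← hA.1.eigenvalues_eq_zero_iff, funext_iff]
  refine ⟨fun h i => ?_, fun h i _ => if_pos (h i)⟩
  by_contra hi
  rw [Pi.zero_apply] at hi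
  have h_rpow := h i (Finset.mem_univ i)
  rw [if_neg hi] at h_rpow
  exact (Real.rpow_pos_of_pos ((hA.eigenvalues_nonneg i).lt_of_ne' hi) t).ne' h_rpow

theorem schattenSum_eq_zero_iff (p : ℝ) (X : Matrix n n ℂ) : schattenSum p X = 0 ↔ X = 0 := by
  rw [schattenSum, trace_matRpow_re_eq_zero_iff (posSemidef_self_mul_conjTranspose X),
    self_mul_conjTranspose_eq_zero]

theorem matRpow_mul_matRpow_eq_zero_iff (hA : A.PosSemidef) (hB : B.PosSemidef) (x y : ℝ) :
    matRpow A x * matRpow B y = 0 ↔ A * B = 0 := by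
  have change_exponents (x y x' y' : ℝ) (h : matRpow A x * matRpow B y = 0) :
      matRpow A x' * matRpow B y' = 0 := by
    calc matRpow A x' * matRpow B y'
        = matRpow A (x' - x) * (matRpow A x * matRpow B y) * matRpow B (y' - y) := by
          rw [← mul_assoc, matRpow_mul_matRpow hA, mul_assoc, matRpow_mul_matRpow hB,
            sub_add_cancel, add_sub_cancel]
      _ = 0 := by rw [h, mul_zero, zero_mul]
  constructor
  · intro h
    simpa only [matRpow_one hA, matRpow_one hB] using change_exponents x y 1 1 h
  · intro h
    exact change_exponents 1 1 x y (by rwa [matRpow_one hA, matRpow_one hB])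

theorem trace_matRpow_mul_matRpow_re_eq_zero_iff (hA : A.PosSemidef) (hB : B.PosSemidef)
    (x y : ℝ) : (matRpow A x * matRpow B y).trace.re = 0 ↔ A * B = 0 := by
  have h_im := (Complex.nonneg_iff.mp (trace_matRpow_mul_matRpow_nonneg hA hB x y)).2
  rw [← matRpow_mul_matRpow_eq_zero_iff hA hB (x / 2) (y / 2),
    ← trace_mul_conjTranspose_self_eq_zero_iff, ← trace_matRpow_mul_matRpow_eq hA hB,
    Complex.ext_iff]
  simp [← h_im]

theorem le_rpow_mul_rpow_of_sq_le {N R T θ : ℝ} (hN : 0 ≤ N) (hR : 0 ≤ R) (hT : 0 ≤ T)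
    (hθ : 0 < θ) (h : T ^ 2 ≤ R * (T ^ (2 - 1 / θ) * N ^ (1 / θ - 1))) :
    T ≤ R ^ θ * N ^ (1 - θ) := by
  rcases hT.eq_or_lt with rfl | hT
  · positivity
  have cancelled : T ^ (1 / θ) ≤ R * N ^ (1 / θ - 1) := by
    refine le_of_mul_le_mul_right ?_ (Real.rpow_pos_of_pos hT (2 - 1 / θ))
    calc T ^ (1 / θ) * T ^ (2 - 1 / θ) = T ^ 2 := by
          rw [← Real.rpow_add hT, add_sub_cancel, Real.rpow_two]
      _ ≤ R * (T ^ (2 - 1 / θ) * N ^ (1 / θ - 1)) := h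
      _ = R * N ^ (1 / θ - 1) * T ^ (2 - 1 / θ) := by ring
  calc T = (T ^ (1 / θ)) ^ θ := by rw [← Real.rpow_mul hT.le, one_div_mul_cancel hθ.ne',
          Real.rpow_one]
    _ ≤ (R * N ^ (1 / θ - 1)) ^ θ := by gcongr
    _ = R ^ θ * N ^ (1 - θ) := by
        rw [Real.mul_rpow hR (by positivity), ← Real.rpow_mul hN, sub_mul,
          one_div_mul_cancel hθ.ne', one_mul]

theorem matRpow_mul_matRpow_zero_eq_self (hA : A.PosSemidef) (hAB : A * matRpow B 0 = A) (t : ℝ) :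
    matRpow A t * matRpow B 0 = matRpow A t := by
  calc matRpow A t * matRpow B 0 = matRpow A (t - 1) * (A * matRpow B 0) := by
        rw [← mul_assoc, matRpow_mul_self hA, sub_add_cancel]
    _ = matRpow A t := by rw [hAB, matRpow_mul_self hA, sub_add_cancel]

theorem trace_matRpow_sq_le (hA : A.PosSemidef) (hB : B.PosSemidef)
    (hAB : A * matRpow B 0 = A) (x y z : ℝ) :
    (matRpow A (x + y)).trace.re ^ 2
      ≤ (matRpow A (2 * x) * matRpow B (-(2 * z))).trace.re
        * (matRpow A (2 * y) * matRpow B (2 * z)).trace.re := by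
  have factored : matRpow A x * matRpow B (-z) * (matRpow A y * matRpow B z)ᴴ
      = matRpow A (x + y) := by
    rw [conjTranspose_mul, conjTranspose_matRpow, conjTranspose_matRpow, ← mul_assoc,
      mul_assoc (matRpow A x), matRpow_mul_matRpow hB, neg_add_cancel,
      matRpow_mul_matRpow_zero_eq_self hA hAB, matRpow_mul_matRpow hA]
  have cauchy_schwarz := norm_trace_mul_sq_le (matRpow A x * matRpow B (-z))
    (matRpow A y * matRpow B z)ᴴ
  rw [factored, conjTranspose_conjTranspose, trace_matRpow_mul_matRpow_mul_conjTranspose hA hB,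
    trace_matRpow_mul_matRpow_mul_conjTranspose hA hB, mul_neg] at cauchy_schwarz
  exact (pow_le_pow_left₀ (trace_matRpow_nonneg hA _) (Complex.re_le_norm _) 2).trans
    cauchy_schwarz

theorem trace_matRpow_le_reverse_holder (hA : A.PosSemidef) (hB : B.PosSemidef)
    (hAB : A * matRpow B 0 = A) (p : ℝ) {θ : ℝ} (hθ : 1 / 2 ≤ θ) (hθ₁ : θ ≤ 1) :
    (matRpow A (p * θ)).trace.re
      ≤ (matRpow A p * matRpow B (1 - 1 / θ)).trace.re ^ θ * B.trace.re ^ (1 - θ) := by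
  have hθ₀ : 0 < θ := by linarith
  have hu : 0 ≤ 2 - 1 / θ := sub_nonneg.mpr ((div_le_iff₀ hθ₀).mpr (by linarith))
  have hv : 0 ≤ 1 / θ - 1 := sub_nonneg.mpr ((le_div_iff₀ hθ₀).mpr (by linarith))
  have cauchy_schwarz := trace_matRpow_sq_le hA hB hAB (p / 2) (p * (θ - 1 / 2)) ((1 / θ - 1) / 2)
  have holder := trace_matRpow_mul_matRpow_le hA hB (p := p * θ) (q := 1) hu hv (by ring)
  have exponent : p * θ * (2 - 1 / θ) = 2 * (p * (θ - 1 / 2)) := by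
    field_simp
  rw [exponent, one_mul, matRpow_one hB] at holder
  rw [show p / 2 + p * (θ - 1 / 2) = p * θ by ring, mul_div_cancel₀ p two_ne_zero,
    mul_div_cancel₀ _ two_ne_zero, neg_sub] at cauchy_schwarz
  have hR := (Complex.nonneg_iff.mp (trace_matRpow_mul_matRpow_nonneg hA hB p (1 - 1 / θ))).1
  refine le_rpow_mul_rpow_of_sq_le (Complex.nonneg_iff.mp hB.trace_nonneg).1 hR
    (trace_matRpow_nonneg hA _) hθ₀ (cauchy_schwarz.trans ?_)
  gcongr

/-- The trace functional inside `renyiDiv`. -/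
noncomputable def renyiTrace (γ : ℝ) (ρ σ : Matrix n n ℂ) : ℝ :=
  (matRpow ρ γ * matRpow σ (1 - γ)).trace.re

/-- The trace functional inside `sandwichedRenyiDiv`. -/
noncomputable def sandwichedRenyiTrace (α : ℝ) (ρ σ : Matrix n n ℂ) : ℝ :=
  (matRpow (matRpow σ ((1 - α) / (2 * α)) * ρ * matRpow σ ((1 - α) / (2 * α))) α).trace.re

theorem renyiTrace_eq_schattenSum (hρ : ρ.PosSemidef) (hσ : σ.PosSemidef) (γ : ℝ) :
    renyiTrace γ ρ σ = schattenSum 2 (matRpow ρ (γ / 2) * matRpow σ ((1 - γ) / 2)) := by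
  rw [schattenSum, div_self two_ne_zero, matRpow_one (posSemidef_self_mul_conjTranspose _),
    renyiTrace, trace_matRpow_mul_matRpow_eq hρ hσ]

theorem sandwichedRenyiTrace_eq_schattenSum (hρ : ρ.PosSemidef) (α : ℝ) :
    sandwichedRenyiTrace α ρ σ
      = schattenSum (2 * α) (matRpow ρ (1 / 2) * matRpow σ ((1 - α) / (2 * α))) := by
  rw [schattenSum, trace_matRpow_mul_conjTranspose_comm, conjTranspose_mul, conjTranspose_matRpow,
    conjTranspose_matRpow, mul_assoc, ← mul_assoc (matRpow ρ _), matRpow_mul_matRpow hρ,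
    add_halves, matRpow_one hρ, ← mul_assoc, mul_div_cancel_left₀ α two_ne_zero,
    sandwichedRenyiTrace]

theorem renyiTrace_eq_zero_iff (hρ : ρ.PosSemidef) (hσ : σ.PosSemidef) (γ : ℝ) :
    renyiTrace γ ρ σ = 0 ↔ ρ * σ = 0 :=
  trace_matRpow_mul_matRpow_re_eq_zero_iff hρ hσ γ (1 - γ)

theorem sandwichedRenyiTrace_eq_zero_iff (hρ : ρ.PosSemidef) (hσ : σ.PosSemidef) (α : ℝ) :
    sandwichedRenyiTrace α ρ σ = 0 ↔ ρ * σ = 0 := by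
  rw [sandwichedRenyiTrace_eq_schattenSum hρ, schattenSum_eq_zero_iff,
    matRpow_mul_matRpow_eq_zero_iff hρ hσ]

theorem renyiTrace_pos (hρ : ρ.PosSemidef) (hσ : σ.PosSemidef) (h : ρ * σ ≠ 0) (γ : ℝ) :
    0 < renyiTrace γ ρ σ :=
  (Complex.nonneg_iff.mp (trace_matRpow_mul_matRpow_nonneg hρ hσ γ (1 - γ))).1.lt_of_ne'
    (mt (renyiTrace_eq_zero_iff hρ hσ γ).mp h)

theorem sandwichedRenyiTrace_pos (hρ : ρ.PosSemidef) (hσ : σ.PosSemidef) (h : ρ * σ ≠ 0) (α : ℝ) :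
    0 < sandwichedRenyiTrace α ρ σ :=
  (sandwichedRenyiTrace_eq_schattenSum hρ α ▸ schattenSum_nonneg _ _).lt_of_ne'
    (mt (sandwichedRenyiTrace_eq_zero_iff hρ hσ α).mp h)

theorem renyiTrace_le_sandwichedRenyiTrace (hρ : ρ.PosSemidef) (hσ : σ.PosSemidef) {α : ℝ}
    (hα : 1 / 2 ≤ α) (hα₁ : α ≤ 1) : renyiTrace α ρ σ ≤ sandwichedRenyiTrace α ρ σ := by
  have hα₀ : 0 < α := by linarith
  have alt := schattenSum_rpow_mul_rpow_le hρ hσ (1 / 2) ((1 - α) / (2 * α)) (p := 2 * α) (t := α)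
    (by linarith) hα₀ hα₁
  rw [renyiTrace_eq_schattenSum hρ hσ, sandwichedRenyiTrace_eq_schattenSum hρ]
  convert alt using 4 <;> field_simp

theorem sandwichedRenyiTrace_le_renyiTrace (hρ : ρ.PosSemidef) (hσ : σ.PosSemidef) {α : ℝ}
    (hα : 1 ≤ α) : sandwichedRenyiTrace α ρ σ ≤ renyiTrace α ρ σ := by
  have hα₀ : 0 < α := by linarith
  have alt := schattenSum_rpow_mul_rpow_le hρ hσ (α / 2) ((1 - α) / 2) (p := 2) (t := 1 / α)
    one_le_two (by positivity) ((div_le_one hα₀).mpr hα)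
  rw [renyiTrace_eq_schattenSum hρ hσ, sandwichedRenyiTrace_eq_schattenSum hρ]
  convert alt using 4 <;> field_simp

-- With the sandwiching moved from `σ` to `ρ`, both functionals are traces of powers of the same `Q`
-- against powers of `ρ`, to which Hölder's inequality and its reverse apply.
theorem exists_posSemidef_trace_matRpow_eq (hρ : ρ.PosSemidef) (hσ : σ.PosSemidef) {α : ℝ}
    (hα : α ≠ 0) : ∃ Q : Matrix n n ℂ, Q.PosSemidef ∧ Q * matRpow ρ 0 = Q ∧
      sandwichedRenyiTrace α ρ σ = (matRpow Q α).trace.re ∧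
      renyiTrace (2 - 1 / α) ρ σ = (Q * matRpow ρ (1 - 1 / α)).trace.re := by
  set X := matRpow ρ (1 / 2) * matRpow σ ((1 - α) / (2 * α)) with hX
  have hXX : X * Xᴴ = matRpow ρ (1 / 2) * matRpow σ (1 / α - 1) * matRpow ρ (1 / 2) := by
    rw [hX, conjTranspose_mul, conjTranspose_matRpow, conjTranspose_matRpow, ← mul_assoc,
      mul_assoc (matRpow ρ _), matRpow_mul_matRpow hσ]
    congr 3
    field_simp
    ring
  refine ⟨X * Xᴴ, posSemidef_self_mul_conjTranspose X, ?_, ?_, ?_⟩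
  · rw [hXX, mul_assoc, matRpow_mul_matRpow hρ, add_zero]
  · rw [sandwichedRenyiTrace_eq_schattenSum hρ, schattenSum, mul_div_cancel_left₀ α two_ne_zero]
  · rw [hXX, mul_assoc, matRpow_mul_matRpow hρ, Matrix.trace_mul_comm, ← mul_assoc,
      matRpow_mul_matRpow hρ, renyiTrace]
    congr 4 <;> ring

theorem sandwichedRenyiTrace_le_renyiTrace_rpow (hρ : ρ.PosSemidef) (hσ : σ.PosSemidef) {α : ℝ}
    (hα : 1 / 2 ≤ α) (hα₁ : α ≤ 1) :
    sandwichedRenyiTrace α ρ σ ≤ renyiTrace (2 - 1 / α) ρ σ ^ α * ρ.trace.re ^ (1 - α) := by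
  obtain ⟨Q, hQ, hQρ, sandwiched_eq, renyi_eq⟩ :=
    exists_posSemidef_trace_matRpow_eq hρ hσ (α := α) (by linarith)
  have reverse_holder := trace_matRpow_le_reverse_holder hQ hρ hQρ 1 hα hα₁
  rwa [one_mul, matRpow_one hQ, ← sandwiched_eq, ← renyi_eq] at reverse_holder

theorem renyiTrace_le_sandwichedRenyiTrace_rpow (hρ : ρ.PosSemidef) (hσ : σ.PosSemidef) {α : ℝ}
    (hα : 1 ≤ α) :
    renyiTrace (2 - 1 / α) ρ σ
      ≤ sandwichedRenyiTrace α ρ σ ^ (1 / α) * ρ.trace.re ^ (1 - 1 / α) := by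
  have hα₀ : 0 < α := by linarith
  obtain ⟨Q, hQ, -, sandwiched_eq, renyi_eq⟩ :=
    exists_posSemidef_trace_matRpow_eq hρ hσ hα₀.ne'
  have holder := trace_matRpow_mul_matRpow_le hQ hρ (p := α) (q := 1) (u := 1 / α)
    (by positivity) (sub_nonneg.mpr ((div_le_one hα₀).mpr hα)) (add_sub_cancel _ _)
  rwa [mul_one_div_cancel hα₀.ne', one_mul, matRpow_one hQ, matRpow_one hρ, ← sandwiched_eq,
    ← renyi_eq] at holder

theorem renyiTrace_le_trace_rpow_mul_trace_rpow (hρ : ρ.PosSemidef) (hσ : σ.PosSemidef) {γ : ℝ}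
    (hγ₀ : 0 ≤ γ) (hγ₁ : γ ≤ 1) :
    renyiTrace γ ρ σ ≤ ρ.trace.re ^ γ * σ.trace.re ^ (1 - γ) := by
  have holder := trace_matRpow_mul_matRpow_le hρ hσ (p := 1) (q := 1) hγ₀ (sub_nonneg.mpr hγ₁)
    (add_sub_cancel γ 1)
  rwa [one_mul, one_mul, matRpow_one hρ, matRpow_one hσ] at holder

theorem trace_le_renyiTrace_rpow (hρ : ρ.PosSemidef) (hσ : σ.PosSemidef)
    (hsupp : ρ * matRpow σ 0 = ρ) {γ : ℝ} (hγ₁ : 1 ≤ γ) (hγ₂ : γ ≤ 2) :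
    ρ.trace.re ≤ renyiTrace γ ρ σ ^ (1 / γ) * σ.trace.re ^ (1 - 1 / γ) := by
  have hγ₀ : 0 < γ := by linarith
  have reverse_holder := trace_matRpow_le_reverse_holder hρ hσ hsupp γ (θ := 1 / γ)
    (one_div_le_one_div_of_le hγ₀ hγ₂) ((div_le_one hγ₀).mpr hγ₁)
  rwa [mul_one_div_cancel hγ₀.ne', matRpow_one hρ, one_div_one_div] at reverse_holder

end TraceFunctionals

section Divergences

variable {n : Type*} [Fintype n] [DecidableEq n] {ρ σ : Matrix n n ℂ}

theorem renyiDiv_eq (γ : ℝ) (ρ σ : Matrix n n ℂ) :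
    renyiDiv γ ρ σ = (γ - 1)⁻¹ * Real.log (renyiTrace γ ρ σ) :=
  rfl

theorem sandwichedRenyiDiv_eq (α : ℝ) (ρ σ : Matrix n n ℂ) :
    sandwichedRenyiDiv α ρ σ = (α - 1)⁻¹ * Real.log (sandwichedRenyiTrace α ρ σ) :=
  rfl

-- For orthogonal `ρ` and `σ` the divergences take the junk value `0` since `Real.log 0 = 0`.
theorem renyiDiv_eq_zero_of_mul_eq_zero (hρ : ρ.PosSemidef) (hσ : σ.PosSemidef)
    (h : ρ * σ = 0) (γ : ℝ) : renyiDiv γ ρ σ = 0 := by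
  rw [renyiDiv_eq, (renyiTrace_eq_zero_iff hρ hσ γ).mpr h, Real.log_zero, mul_zero]

theorem sandwichedRenyiDiv_eq_zero_of_mul_eq_zero (hρ : ρ.PosSemidef) (hσ : σ.PosSemidef)
    (h : ρ * σ = 0) (α : ℝ) : sandwichedRenyiDiv α ρ σ = 0 := by
  rw [sandwichedRenyiDiv_eq, (sandwichedRenyiTrace_eq_zero_iff hρ hσ α).mpr h, Real.log_zero,
    mul_zero]

theorem sandwichedRenyiDiv_le_renyiDiv (hρ : ρ.PosSemidef) (hσ : σ.PosSemidef) {α : ℝ}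
    (hα : 1 / 2 ≤ α) : sandwichedRenyiDiv α ρ σ ≤ renyiDiv α ρ σ := by
  by_cases h : ρ * σ = 0
  · rw [renyiDiv_eq_zero_of_mul_eq_zero hρ hσ h, sandwichedRenyiDiv_eq_zero_of_mul_eq_zero hρ hσ h]
  rcases le_total α 1 with hα₁ | hα₁
  · exact mul_le_mul_of_nonpos_left (Real.log_le_log (renyiTrace_pos hρ hσ h α)
      (renyiTrace_le_sandwichedRenyiTrace hρ hσ hα hα₁)) (inv_nonpos.mpr (sub_nonpos.mpr hα₁))
  · exact mul_le_mul_of_nonneg_left (Real.log_le_log (sandwichedRenyiTrace_pos hρ hσ h α)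
      (sandwichedRenyiTrace_le_renyiTrace hρ hσ hα₁)) (inv_nonneg.mpr (sub_nonneg.mpr hα₁))

theorem renyiDiv_two_sub_le_sandwichedRenyiDiv (hρ : ρ.PosSemidef) (hρ₁ : ρ.trace = 1)
    (hσ : σ.PosSemidef) {α : ℝ} (hα : 1 / 2 ≤ α) :
    renyiDiv (2 - 1 / α) ρ σ ≤ sandwichedRenyiDiv α ρ σ := by
  by_cases h : ρ * σ = 0
  · rw [renyiDiv_eq_zero_of_mul_eq_zero hρ hσ h, sandwichedRenyiDiv_eq_zero_of_mul_eq_zero hρ hσ h]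
  have hα₀ : 0 < α := by linarith
  have renyi_pos := renyiTrace_pos hρ hσ h (2 - 1 / α)
  have sandwiched_pos := sandwichedRenyiTrace_pos hρ hσ h α
  have coefficient : (2 - 1 / α - 1)⁻¹ = (α - 1)⁻¹ * α := by
    rw [show 2 - 1 / α - 1 = (α - 1) / α by field_simp; ring, inv_div, div_eq_inv_mul]
  rw [renyiDiv_eq, sandwichedRenyiDiv_eq, coefficient, mul_assoc]
  rcases le_total α 1 with hα₁ | hα₁
  · refine mul_le_mul_of_nonpos_left ?_ (inv_nonpos.mpr (sub_nonpos.mpr hα₁))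
    rw [← Real.log_rpow renyi_pos]
    refine Real.log_le_log sandwiched_pos ?_
    simpa [hρ₁] using sandwichedRenyiTrace_le_renyiTrace_rpow hρ hσ hα hα₁
  · refine mul_le_mul_of_nonneg_left ?_ (inv_nonneg.mpr (sub_nonneg.mpr hα₁))
    rw [mul_comm, ← le_div_iff₀ hα₀, div_eq_inv_mul (Real.log _), ← one_div,
      ← Real.log_rpow sandwiched_pos]
    refine Real.log_le_log renyi_pos ?_
    simpa [hρ₁] using renyiTrace_le_sandwichedRenyiTrace_rpow hρ hσ hα₁

theorem neg_renyiDiv_le_log_trace_of_lt_one (hρ : ρ.PosSemidef) (hρ₁ : ρ.trace = 1)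
    (hσ : σ.PosSemidef) (hσ₁ : 1 ≤ σ.trace.re) {γ : ℝ} (hγ₀ : 0 ≤ γ) (hγ₁ : γ < 1) :
    -renyiDiv γ ρ σ ≤ Real.log σ.trace.re := by
  by_cases h : ρ * σ = 0
  · rw [renyiDiv_eq_zero_of_mul_eq_zero hρ hσ h, neg_zero]
    exact Real.log_nonneg hσ₁
  have holder := renyiTrace_le_trace_rpow_mul_trace_rpow hρ hσ hγ₀ hγ₁.le
  rw [hρ₁, Complex.one_re, Real.one_rpow, one_mul] at holder
  have log_holder := Real.log_le_log (renyiTrace_pos hρ hσ h γ) holder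
  rw [Real.log_rpow (by linarith)] at log_holder
  rw [renyiDiv_eq, ← neg_mul, ← inv_neg, neg_sub, inv_mul_le_iff₀ (sub_pos.mpr hγ₁)]
  exact log_holder

theorem neg_renyiDiv_le_log_trace_of_one_lt (hρ : ρ.PosSemidef) (hρ₁ : ρ.trace = 1)
    (hσ : σ.PosSemidef) (hsupp : ρ * matRpow σ 0 = ρ) {γ : ℝ} (hγ₁ : 1 < γ) (hγ₂ : γ ≤ 2) :
    -renyiDiv γ ρ σ ≤ Real.log σ.trace.re := by
  have h : ρ * σ ≠ 0 := fun h => by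
    rw [← matRpow_mul_matRpow_eq_zero_iff hρ hσ 1 0, matRpow_one hρ, hsupp] at h
    simp [h] at hρ₁
  have hσ₀ : 0 < σ.trace.re := by
    refine (Complex.nonneg_iff.mp hσ.trace_nonneg).1.lt_of_ne' fun h_trace => h ?_
    rw [← matRpow_one hσ, trace_matRpow_re_eq_zero_iff hσ] at h_trace
    rw [h_trace, mul_zero]
  have hR := renyiTrace_pos hρ hσ h γ
  have hγ₀ : 0 < γ := zero_lt_one.trans hγ₁
  have reverse_holder := trace_le_renyiTrace_rpow hρ hσ hsupp hγ₁.le hγ₂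
  rw [hρ₁, Complex.one_re] at reverse_holder
  have log_nonneg := Real.log_nonneg reverse_holder
  rw [Real.log_mul (by positivity) (by positivity), Real.log_rpow hR, Real.log_rpow hσ₀]
    at log_nonneg
  have scaled : 0 ≤ Real.log (renyiTrace γ ρ σ) + (γ - 1) * Real.log σ.trace.re := by
    have := mul_nonneg hγ₀.le log_nonneg
    field_simp at this
    exact this
  rw [renyiDiv_eq, neg_le, ← div_eq_inv_mul, le_div_iff₀ (sub_pos.mpr hγ₁)]
  linarith

end Divergences

section PartialTrace

variable {a b : Type*} [Fintype a] [DecidableEq a] [Fintype b]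

theorem trace_mul_re_eq_zero_iff {n : Type*} [Fintype n] {A B : Matrix n n ℂ}
    (hA : A.PosSemidef) (hB : B.PosSemidef) :
    (A * B).trace.re = 0 ↔ A * B = 0 := by
  classical
  simpa only [matRpow_one hA, matRpow_one hB] using
    trace_matRpow_mul_matRpow_re_eq_zero_iff hA hB 1 1

theorem trace_mul_one_kronecker (M : Matrix (a × b) (a × b) ℂ) (P : Matrix b b ℂ) :
    (M * ((1 : Matrix a a ℂ) ⊗ₖ P)).trace = (trFst M * P).trace := by
  calc (M * ((1 : Matrix a a ℂ) ⊗ₖ P)).trace = ∑ i, ∑ j, ∑ j', M (i, j) (i, j') * P j' j := by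
        simp only [Matrix.trace, Matrix.diag_apply, Matrix.mul_apply, kroneckerMap_apply,
          Fintype.sum_prod_type_right, Matrix.one_apply, ite_mul, one_mul, zero_mul, mul_ite,
          mul_zero, Finset.sum_ite_eq', Finset.mem_univ, if_true]
        exact Finset.sum_comm
    _ = ∑ j, ∑ j', ∑ i, M (i, j) (i, j') * P j' j := by
        rw [Finset.sum_comm]
        exact Finset.sum_congr rfl fun j _ => Finset.sum_comm
    _ = (trFst M * P).trace := by
        simp only [Matrix.trace, Matrix.diag_apply, Matrix.mul_apply, trFst, Matrix.of_apply,
          Finset.sum_mul]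

variable [DecidableEq b]

theorem mul_matRpow_zero_of_ker_le {n : Type*} [Fintype n] [DecidableEq n] {σ τ : Matrix n n ℂ}
    (hσ : σ.PosSemidef) (hker : LinearMap.ker σ.mulVecLin ≤ LinearMap.ker τ.mulVecLin) :
    τ * matRpow σ 0 = τ := by
  refine ext_iff_mulVec.mpr fun v => ?_
  have hv : matRpow σ 0 *ᵥ v - v ∈ LinearMap.ker σ.mulVecLin := by
    rw [LinearMap.mem_ker, mulVecLin_apply, mulVec_sub, mulVec_mulVec, self_mul_matRpow_zero hσ,
      sub_self]
  have hτv := hker hv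
  rwa [LinearMap.mem_ker, mulVecLin_apply, mulVec_sub, mulVec_mulVec, sub_eq_zero] at hτv

theorem posSemidef_one_sub_matRpow_zero {n : Type*} [Fintype n] [DecidableEq n]
    {σ : Matrix n n ℂ} (hσ : σ.PosSemidef) : (1 - matRpow σ 0).PosSemidef := by
  have hP : (1 - matRpow σ 0)ᴴ * (1 - matRpow σ 0) = 1 - matRpow σ 0 := by
    rw [conjTranspose_sub, conjTranspose_one, conjTranspose_matRpow, sub_mul, one_mul, mul_sub,
      mul_one, matRpow_mul_matRpow hσ, add_zero, sub_self, sub_zero]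
  exact hP ▸ posSemidef_conjTranspose_mul_self _

theorem mul_matRpow_one_kronecker_zero {ρ : Matrix (a × b) (a × b) ℂ} (hρ : ρ.PosSemidef)
    {σ : Matrix b b ℂ} (hσ : σ.PosSemidef)
    (hker : LinearMap.ker σ.mulVecLin ≤ LinearMap.ker (trFst ρ).mulVecLin) :
    ρ * matRpow ((1 : Matrix a a ℂ) ⊗ₖ σ) 0 = ρ := by
  set P := 1 - matRpow σ 0 with hP_def
  have hP : ((1 : Matrix a a ℂ) ⊗ₖ P).PosSemidef :=
    PosSemidef.one.kronecker (posSemidef_one_sub_matRpow_zero hσ)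
  have trace_eq_zero : (ρ * ((1 : Matrix a a ℂ) ⊗ₖ P)).trace = 0 := by
    rw [trace_mul_one_kronecker, hP_def, mul_sub, mul_one, mul_matRpow_zero_of_ker_le hσ hker,
      sub_self, Matrix.trace_zero]
  have hρP : ρ * ((1 : Matrix a a ℂ) ⊗ₖ P) = 0 :=
    (trace_mul_re_eq_zero_iff hρ hP).mp (by rw [trace_eq_zero, Complex.zero_re])
  have supported : ρ * ((1 : Matrix a a ℂ) ⊗ₖ matRpow σ 0) = ρ := by
    rw [← zero_add (ρ * _), ← hρP, ← mul_add, ← kronecker_add, hP_def, sub_add_cancel,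
      one_kronecker_one, mul_one]
  have factored : (1 : Matrix a a ℂ) ⊗ₖ matRpow σ 0
      = ((1 : Matrix a a ℂ) ⊗ₖ matRpow σ (-1)) * ((1 : Matrix a a ℂ) ⊗ₖ σ) := by
    rw [← mul_kronecker_mul, one_mul, matRpow_mul_self hσ, neg_add_cancel]
  calc ρ * matRpow ((1 : Matrix a a ℂ) ⊗ₖ σ) 0
      = ρ * ((1 : Matrix a a ℂ) ⊗ₖ matRpow σ (-1))
          * (((1 : Matrix a a ℂ) ⊗ₖ σ) * matRpow ((1 : Matrix a a ℂ) ⊗ₖ σ) 0) := by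
        nth_rw 1 [← supported]
        rw [factored]
        simp only [mul_assoc]
    _ = ρ := by rw [self_mul_matRpow_zero (PosSemidef.one.kronecker hσ), mul_assoc, ← factored,
          supported]

end PartialTrace

section ConditionalEntropies

variable {a b : Type*} [Fintype a] [Fintype b]

/-- The states `σ_B` over which `H_γ^↑(A|B)_ρ` and `H̃_γ^↑(A|B)_ρ` are optimised; the support
condition is imposed only for `γ > 1`. -/
def conditioningStates (γ : ℝ) (ρ : Matrix (a × b) (a × b) ℂ) : Set (Matrix b b ℂ) :=
  {σ | σ.PosSemidef ∧ σ.trace = 1 ∧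
    (1 < γ → LinearMap.ker σ.mulVecLin ≤ LinearMap.ker (trFst ρ).mulVecLin)}

theorem conditioningStates_two_sub_one_div {α : ℝ} (hα : 0 < α) (ρ : Matrix (a × b) (a × b) ℂ) :
    conditioningStates (2 - 1 / α) ρ = conditioningStates α ρ := by
  have one_lt_iff : 1 < 2 - 1 / α ↔ 1 < α := by
    rw [lt_sub_comm, div_lt_iff₀ hα]
    norm_num
  simp only [conditioningStates, one_lt_iff]

variable [DecidableEq a] [DecidableEq b]

theorem condRenyiUp_eq_iSup (γ : ℝ) (ρ : Matrix (a × b) (a × b) ℂ) :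
    condRenyiUp γ ρ
      = ⨆ σ : conditioningStates γ ρ, -renyiDiv γ ρ ((1 : Matrix a a ℂ) ⊗ₖ (σ : Matrix b b ℂ)) := by
  refine congrArg sSup (Set.ext fun x => ?_)
  simp only [conditioningStates, Set.mem_range, Subtype.exists, Set.mem_ofPred_eq, exists_prop,
    and_assoc, @eq_comm ℝ x]

theorem condSandwichedRenyiUp_eq_iSup (γ : ℝ) (ρ : Matrix (a × b) (a × b) ℂ) :
    condSandwichedRenyiUp γ ρ
      = ⨆ σ : conditioningStates γ ρ,
          -sandwichedRenyiDiv γ ρ ((1 : Matrix a a ℂ) ⊗ₖ (σ : Matrix b b ℂ)) := by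
  refine congrArg sSup (Set.ext fun x => ?_)
  simp only [conditioningStates, Set.mem_range, Subtype.exists, Set.mem_ofPred_eq, exists_prop,
    and_assoc, @eq_comm ℝ x]

theorem neg_renyiDiv_le_log_card {ρ : Matrix (a × b) (a × b) ℂ} (hρ : ρ.PosSemidef)
    (hρ₁ : ρ.trace = 1) {γ : ℝ} (hγ₀ : 0 ≤ γ) (hγ₂ : γ ≤ 2) (hγ₁ : γ ≠ 1) {σ : Matrix b b ℂ}
    (hσ : σ ∈ conditioningStates γ ρ) :
    -renyiDiv γ ρ ((1 : Matrix a a ℂ) ⊗ₖ σ) ≤ Real.log (Fintype.card a) := by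
  obtain ⟨hσ, hσ₁, hker⟩ := hσ
  have hτ : ((1 : Matrix a a ℂ) ⊗ₖ σ).PosSemidef := PosSemidef.one.kronecker hσ
  have trace_eq : ((1 : Matrix a a ℂ) ⊗ₖ σ).trace.re = (Fintype.card a : ℝ) := by
    rw [trace_kronecker, hσ₁, mul_one, trace_one, Complex.natCast_re]
  have one_le_trace : 1 ≤ ((1 : Matrix a a ℂ) ⊗ₖ σ).trace.re := by
    have : Nonempty a := by
      by_contra h
      rw [not_nonempty_iff] at h
      exact zero_ne_one ((trace_eq_zero_of_isEmpty ρ).symm.trans hρ₁)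
    rw [trace_eq, Nat.one_le_cast]
    exact Fintype.card_pos
  rw [← trace_eq]
  rcases hγ₁.lt_or_gt with hγ₁ | hγ₁
  · exact neg_renyiDiv_le_log_trace_of_lt_one hρ hρ₁ hτ one_le_trace hγ₀ hγ₁
  · exact neg_renyiDiv_le_log_trace_of_one_lt hρ hρ₁ hτ
      (mul_matRpow_one_kronecker_zero hρ hσ (hker hγ₁)) hγ₁ hγ₂

end ConditionalEntropies

theorem sandwich_up_up {a b : Type*} [Fintype a] [DecidableEq a] [Fintype b] [DecidableEq b]
    (ρ : Matrix (a × b) (a × b) ℂ) (hρ : ρ.PosSemidef) (hρ1 : ρ.trace = 1)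
    (α : ℝ) (hα : (1 : ℝ) / 2 ≤ α) (hα1 : α ≠ 1) :
    condRenyiUp α ρ ≤ condSandwichedRenyiUp α ρ ∧
      condSandwichedRenyiUp α ρ ≤ condRenyiUp (2 - 1 / α) ρ := by
  have hα0 : 0 < α := by linarith
  have same_states := conditioningStates_two_sub_one_div hα0 ρ
  rw [condRenyiUp_eq_iSup, condRenyiUp_eq_iSup, condSandwichedRenyiUp_eq_iSup, same_states]
  have kronecker_posSemidef (σ : conditioningStates α ρ) : ((1 : Matrix a a ℂ) ⊗ₖ σ.1).PosSemidef :=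
    PosSemidef.one.kronecker σ.2.1
  have first_le (σ : conditioningStates α ρ) :=
    neg_le_neg (sandwichedRenyiDiv_le_renyiDiv hρ (kronecker_posSemidef σ) hα)
  have second_le (σ : conditioningStates α ρ) :=
    neg_le_neg (renyiDiv_two_sub_le_sandwichedRenyiDiv hρ hρ1 (kronecker_posSemidef σ) hα)
  have nonneg : 0 ≤ 2 - 1 / α := sub_nonneg.mpr ((div_le_iff₀ hα0).mpr (by linarith))
  have le_two : 2 - 1 / α ≤ 2 := sub_le_self 2 (by positivity)
  have ne_one : 2 - 1 / α ≠ 1 := fun h => hα1 ((div_eq_one_iff_eq hα0.ne').mp (by linarith)).symm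
  have le_log_card (σ : conditioningStates α ρ) :=
    neg_renyiDiv_le_log_card hρ hρ1 nonneg le_two ne_one (same_states.ge σ.2)
  exact ⟨ciSup_mono ⟨_, Set.forall_mem_range.mpr fun σ => (second_le σ).trans (le_log_card σ)⟩
    first_le, ciSup_mono ⟨_, Set.forall_mem_range.mpr le_log_card⟩ second_le⟩
end
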